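/- arXiv:1211.5066 — 2 statements merged into one kernel-verified Lean document; each statement's English description precedes it below -/
import Mathlib

section
/- Let $F_1,\dots,F_N$ be $\mathbb{R}$-linearly independent functions in $L^1(X,\nu)$, let $B = \{\xi\in\mathbb{R}^N : \|\sum_n \xi_n F_n\|_1 \le 1\}$, and let $B^*$ be the dual unit ball $\{\eta : \sup_{\xi\in B}\langle\xi,\eta\rangle \le 1\}$. Then $\mathrm{Vol}_N(B^*) = \frac{2^N}{N!}\int_{X^N} |\Delta(F_1,\dots,F_N;\mathbf{x})|\,d\nu^N(\mathbf{x})$. -/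
open MeasureTheory

/-!
The norm `ξ ↦ ‖∑ ξ n F n‖₁` is the support function of its dual ball `B*`, which is therefore the
zonoid `∫ [-F x, F x] dν(x)`.

If `F` is a simple function, this is a zonotope, a finite sum of segments `[-v j, v j]`, whose
volume is computed by induction on the number of segments. A linear change of variables turns the
new generator into the first basis vector; adding the segment then increases the volume by twice
that of the projection along the first coordinate, and Laplace expansion shows that the determinant
sum grows in the same way.

A general `F` is approximated in `L¹` by simple functions `G`. The support functions of `F` and `G`
differ by at most `δ ∑ |ξ i|` with `δ = ‖F - G‖₁`, so each body is contained in the Minkowski sum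
of the other with the cube `[-δ, δ]^N`. For `G` the enlarged body is again a zonotope, which bounds
the volume from above; for `F` the enlarged bodies decrease to `B*` as `δ → 0`, which bounds it from
below.
-/

open Filter Topology
open scoped Pointwise

section Slices

variable {n : ℕ}

/-- The slice of `K` over a point `y` of the last `n` coordinates, parallel to the first coordinate
axis. -/
def firstCoordSlice (K : Set (Fin (n + 1) → ℝ)) (y : Fin n → ℝ) : Set ℝ :=
  {s | (Fin.cons s y : Fin (n + 1) → ℝ) ∈ K}

theorem volume_eq_lintegral_firstCoordSlice {K : Set (Fin (n + 1) → ℝ)} (hK : MeasurableSet K) :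
    volume K = ∫⁻ y, volume (firstCoordSlice K y) := by
  have hp := (volume_preserving_piFinSuccAbove (fun _ : Fin (n + 1) => ℝ) 0).symm
  rw [← hp.measure_preimage hK.nullMeasurableSet, Measure.volume_eq_prod,
    Measure.prod_apply_symm ((MeasurableEquiv.measurable _) hK)]
  refine lintegral_congr fun y => congrArg volume (Set.ext fun s => ?_)
  simp [MeasurableEquiv.piFinSuccAbove, Fin.insertNthEquiv, firstCoordSlice]

theorem firstCoordSlice_eq_empty {K : Set (Fin (n + 1) → ℝ)} {y : Fin n → ℝ}
    (hy : y ∉ Fin.tail '' K) : firstCoordSlice K y = ∅ :=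
  Set.eq_empty_of_forall_notMem fun s hs => hy ⟨_, hs, by simp⟩

theorem isCompact_firstCoordSlice {K : Set (Fin (n + 1) → ℝ)} (hK : IsCompact K)
    (y : Fin n → ℝ) : IsCompact (firstCoordSlice K y) :=
  (hK.image (continuous_apply 0)).of_isClosed_subset (hK.isClosed.preimage (by fun_prop))
    fun _ hs => ⟨_, hs, rfl⟩

theorem convex_firstCoordSlice {K : Set (Fin (n + 1) → ℝ)} (hK : Convex ℝ K) (y : Fin n → ℝ) :
    Convex ℝ (firstCoordSlice K y) := by
  intro s hs t ht a b ha hb hab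
  have h := hK hs ht ha hb hab
  simp only [firstCoordSlice, Set.mem_ofPred_eq]
  convert! h using 1
  ext i
  cases i using Fin.cases <;> simp [← add_mul, hab]

theorem firstCoordSlice_add_image_Icc (K : Set (Fin (n + 1) → ℝ)) (y : Fin n → ℝ) (a b : ℝ) :
    firstCoordSlice (K + (fun s : ℝ => s • Pi.single 0 1) '' Set.Icc a b) y =
      firstCoordSlice K y + Set.Icc a b := by
  have hcons : ∀ s t : ℝ, (Fin.cons (t + s) y : Fin (n + 1) → ℝ) =
      Fin.cons t y + s • Pi.single 0 1 := fun s t => by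
    ext i; cases i using Fin.cases <;> simp
  ext t
  constructor
  · rintro ⟨z, hz, _, ⟨s, hs, rfl⟩, h⟩
    have hz' : z = (Fin.cons (t - s) y : Fin (n + 1) → ℝ) := by
      rw [← add_left_inj, ← hcons, sub_add_cancel]; exact h
    rw [hz'] at hz
    exact ⟨t - s, hz, s, hs, sub_add_cancel t s⟩
  · rintro ⟨t, ht, s, hs, rfl⟩
    exact ⟨_, ht, _, ⟨s, hs, rfl⟩, (hcons s t).symm⟩

theorem volume_add_Icc {S : Set ℝ} (hS : IsCompact S) (hconn : IsConnected S) {a b : ℝ}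
    (hab : a ≤ b) : volume (S + Set.Icc a b) = volume S + ENNReal.ofReal (b - a) := by
  have hle : sInf S ≤ sSup S := Real.sInf_le_sSup S hS.bddBelow hS.bddAbove
  rw [eq_Icc_of_connected_compact hconn hS, Set.Icc_add_Icc hle hab, Real.volume_Icc,
    Real.volume_Icc, ← ENNReal.ofReal_add (sub_nonneg.2 hle) (sub_nonneg.2 hab)]
  congr 1
  ring

theorem volume_add_image_Icc_smul_single {K : Set (Fin (n + 1) → ℝ)} (hK : IsCompact K)
    (hconv : Convex ℝ K) {a b : ℝ} (hab : a ≤ b) :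
    volume (K + (fun s : ℝ => s • Pi.single 0 1) '' Set.Icc a b) =
      volume K + ENNReal.ofReal (b - a) * volume (Fin.tail '' K) := by
  have htail : MeasurableSet (Fin.tail '' K) :=
    (hK.image (show Continuous (Fin.tail : (Fin (n + 1) → ℝ) → Fin n → ℝ) by
      unfold Fin.tail; fun_prop)).measurableSet
  have hsum : IsCompact (K + (fun s : ℝ => s • (Pi.single 0 1 : Fin (n + 1) → ℝ)) '' Set.Icc a b) :=
    hK.add (isCompact_Icc.image (by fun_prop))
  have hslice : ∀ y, volume (firstCoordSlice K y + Set.Icc a b) =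
      volume (firstCoordSlice K y) +
        ENNReal.ofReal (b - a) * (Fin.tail '' K).indicator 1 y := by
    intro y
    by_cases hy : y ∈ Fin.tail '' K
    · obtain ⟨x, hx, rfl⟩ := hy
      have hne : (firstCoordSlice K (Fin.tail x)).Nonempty :=
        ⟨x 0, by simpa [firstCoordSlice] using hx⟩
      rw [volume_add_Icc (isCompact_firstCoordSlice hK _)
        ⟨hne, (convex_firstCoordSlice hconv _).isPreconnected⟩ hab,
        Set.indicator_of_mem (Set.mem_image_of_mem _ hx), Pi.one_apply, mul_one]
    · simp [firstCoordSlice_eq_empty hy, hy]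
  simp_rw [volume_eq_lintegral_firstCoordSlice hsum.measurableSet, firstCoordSlice_add_image_Icc,
    hslice]
  rw [lintegral_add_right _ ((measurable_one.indicator htail).const_mul _),
    lintegral_const_mul _ (measurable_one.indicator htail), lintegral_indicator_one htail,
    ← volume_eq_lintegral_firstCoordSlice hK.measurableSet]

end Slices

section Zonotope

variable {ι κ E F : Type*} [Fintype ι] [Fintype κ]
  [AddCommGroup E] [Module ℝ E] [AddCommGroup F] [Module ℝ F]

/-- The zonotope generated by the vectors `v j`, i.e. the Minkowski sum of the segments
`[-v j, v j]`. -/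
def zonotope (v : ι → E) : Set E :=
  Fintype.linearCombination ℝ v '' Set.Icc (-1) 1

theorem convex_zonotope (v : ι → E) : Convex ℝ (zonotope v) :=
  (convex_Icc _ _).linear_image _

theorem isCompact_zonotope [TopologicalSpace E] [ContinuousAdd E] [ContinuousSMul ℝ E]
    (v : ι → E) : IsCompact (zonotope v) :=
  isCompact_Icc.image (by
    simp only [funext (Fintype.linearCombination_apply ℝ v)]
    fun_prop)

theorem image_zonotope (T : E →ₗ[ℝ] F) (v : ι → E) : T '' zonotope v = zonotope (T ∘ v) := by
  rw [zonotope, Set.image_image]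
  exact Set.image_congr fun t _ => by simp [Fintype.linearCombination_apply]

theorem zonotope_comp_equiv (e : κ ≃ ι) (v : ι → E) : zonotope (v ∘ e) = zonotope v := by
  ext x
  constructor
  · rintro ⟨t, ht, rfl⟩
    refine ⟨t ∘ e.symm, ⟨fun j => ht.1 _, fun j => ht.2 _⟩, ?_⟩
    simp [Fintype.linearCombination_apply, ← e.sum_comp]
  · rintro ⟨t, ht, rfl⟩
    exact ⟨t ∘ e, ⟨fun j => ht.1 _, fun j => ht.2 _⟩, e.sum_comp fun j => t j • v j⟩

theorem zonotope_option (v : Option ι → E) :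
    zonotope v = zonotope (v ∘ some) + (fun s : ℝ => s • v none) '' Set.Icc (-1) 1 := by
  ext x
  constructor
  · rintro ⟨t, ht, rfl⟩
    refine ⟨_, ⟨t ∘ some, ⟨fun j => ht.1 _, fun j => ht.2 _⟩, rfl⟩, _,
      ⟨t none, ⟨ht.1 none, ht.2 none⟩, rfl⟩, ?_⟩
    simp [Fintype.linearCombination_apply, Fintype.sum_option, add_comm]
  · rintro ⟨_, ⟨t, ht, rfl⟩, _, ⟨s, hs, rfl⟩, rfl⟩
    refine ⟨fun o => o.elim s t, ⟨?_, ?_⟩, ?_⟩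
    · rintro (_ | j)
      exacts [hs.1, ht.1 j]
    · rintro (_ | j)
      exacts [hs.2, ht.2 j]
    · simp [Fintype.linearCombination_apply, Fintype.sum_option, add_comm]

end Zonotope

section ZonotopeVolume

variable {ι κ n : Type*} [Fintype ι] [Fintype κ] [Fintype n] [DecidableEq n]

/-- The sum of `|det (v (f 1), …, v (f N))|` over all `N`-tuples `f` of indices of a finite family
`v` of vectors; up to the factor `2 ^ N / N!` it is the volume of the zonotope generated by `v`.
Tuples with a repeated index contribute `0`. -/
def absDetSum (v : ι → n → ℝ) : ℝ :=
  ∑ f : n → ι, |(Matrix.of (v ∘ f)).det|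

theorem absDetSum_nonneg (v : ι → n → ℝ) : 0 ≤ absDetSum v :=
  Finset.sum_nonneg fun _ _ => abs_nonneg _

theorem absDetSum_comp_equiv (e : κ ≃ ι) (v : ι → n → ℝ) : absDetSum (v ∘ e) = absDetSum v :=
  ((Equiv.refl n).arrowCongr e).sum_comp fun f => |(Matrix.of (v ∘ f)).det|

theorem absDetSum_comp_linearMap (T : (n → ℝ) →ₗ[ℝ] n → ℝ) (v : ι → n → ℝ) :
    absDetSum (T ∘ v) = |LinearMap.det T| * absDetSum v := by
  have hdet : ∀ f : n → ι, (Matrix.of (T ∘ v ∘ f)).det =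
      LinearMap.det T * (Matrix.of (v ∘ f)).det := fun f => by
    simpa only [Pi.basisFun_det_apply] using (Pi.basisFun ℝ n).det_comp T (v ∘ f)
  simp_rw [absDetSum, Function.comp_assoc, hdet, abs_mul, ← Finset.mul_sum]

theorem sum_option_eq_of_eq_zero {M : Type*} [AddCommMonoid M] {N : ℕ}
    (G : (Fin (N + 1) → Option ι) → M)
    (hG : ∀ f i j, i ≠ j → f i = none → f j = none → G f = 0) :
    ∑ f, G f = ∑ g : Fin (N + 1) → ι, G (some ∘ g) +
      ∑ p : Fin (N + 1), ∑ g : Fin N → ι, G (p.insertNth none (some ∘ g)) := by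
  rw [← Fintype.sum_prod_type', ← Fintype.sum_sumElim]
  symm
  let Φ : (Fin (N + 1) → ι) ⊕ (Fin (N + 1) × (Fin N → ι)) → Fin (N + 1) → Option ι :=
    Sum.elim (some ∘ ·) fun q => q.1.insertNth none (some ∘ q.2)
  refine Fintype.sum_of_injective Φ ?_ _ _ (fun f hf => ?_) (by rintro (g | q) <;> rfl)
  · refine Function.Injective.sumElim (Option.some_injective ι).comp_left ?_ ?_
    · rintro ⟨p, g⟩ ⟨q, h⟩ heq
      dsimp only at heq
      obtain rfl : p = q := by
        by_contra hpq
        obtain ⟨k, rfl⟩ := Fin.exists_succAbove_eq hpq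
        simpa using congrFun heq (q.succAbove k)
      obtain ⟨-, hgh⟩ := Fin.insertNth_inj.1 heq
      rw [(Option.some_injective ι).comp_left hgh]
    · intro g q h
      simpa using congrFun h q.1
  · by_cases hsome : ∀ i, ∃ a, some a = f i
    · choose g hg using hsome
      exact absurd ⟨Sum.inl g, funext hg⟩ hf
    · obtain ⟨p, hp⟩ : ∃ p, f p = none := by
        simpa [Option.eq_none_iff_forall_ne_some, eq_comm] using hsome
      by_cases hrest : ∀ i, ∃ a, some a = f (p.succAbove i)
      · choose g hg using hrest
        refine absurd ⟨Sum.inr (p, g), ?_⟩ hf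
        simp only [Φ, Sum.elim_inr, funext hg, Function.comp_def]
        rw [← hp]
        exact Fin.insertNth_self_removeNth p f
      · obtain ⟨i, hi⟩ : ∃ i, f (p.succAbove i) = none := by
          simpa [Option.eq_none_iff_forall_ne_some, eq_comm] using hrest
        exact hG f _ _ (Fin.succAbove_ne p i) hi hp

theorem absDetSum_option {N : ℕ} (v : Option ι → Fin (N + 1) → ℝ) :
    absDetSum v = absDetSum (v ∘ some) +
      ∑ p : Fin (N + 1), ∑ g : Fin N → ι,
        |(Matrix.of (v ∘ (p.insertNth none (some ∘ g) : Fin (N + 1) → Option ι))).det| := by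
  refine sum_option_eq_of_eq_zero _ fun f i j hij hi hj => ?_
  rw [Matrix.det_zero_of_row_eq hij (congrArg v (hi.trans hj.symm)), abs_zero]

theorem absDetSum_option_of_eq_zero {N : ℕ} {v : Option ι → Fin (N + 1) → ℝ}
    (hv : v none = 0) : absDetSum v = absDetSum (v ∘ some) := by
  rw [absDetSum_option, add_eq_left]
  refine Finset.sum_eq_zero fun p _ => Finset.sum_eq_zero fun g _ => ?_
  rw [Matrix.det_eq_zero_of_row_eq_zero p (by simp [hv]), abs_zero]

theorem absDetSum_option_of_eq_single {N : ℕ} {v : Option ι → Fin (N + 1) → ℝ}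
    (hv : v none = Pi.single 0 1) :
    absDetSum v = absDetSum (v ∘ some) + (N + 1) * absDetSum (Fin.tail ∘ v ∘ some) := by
  have hdet : ∀ (p : Fin (N + 1)) (g : Fin N → ι),
      |(Matrix.of (v ∘ (p.insertNth none (some ∘ g) : Fin (N + 1) → Option ι))).det| =
        |(Matrix.of (Fin.tail ∘ v ∘ some ∘ g)).det| := by
    intro p g
    rw [Matrix.det_succ_row _ p, Finset.sum_eq_single 0 _ (by simp)]
    · simp only [abs_mul, abs_pow, abs_neg, abs_one, one_pow, Matrix.of_apply,
        Function.comp_apply, Fin.insertNth_apply_same, hv, Pi.single_eq_same, one_mul]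
      congr 2
      ext i j
      simp [Fin.tail]
    · intro j _ hj
      simp [hv, hj]
  rw [absDetSum_option]
  simp_rw [hdet]
  simp [absDetSum, Function.comp_assoc]

theorem volume_zonotope_of_isEmpty [IsEmpty n] (v : ι → n → ℝ) :
    volume (zonotope v) = ENNReal.ofReal (absDetSum v) := by
  have hne : (zonotope v).Nonempty := ⟨_, 0, by simp, rfl⟩
  rw [Subsingleton.eq_univ_of_nonempty hne]
  simp [absDetSum, volume_pi]

theorem volume_zonotope_option_of_eq_single {N : ℕ} {v : Option ι → Fin (N + 1) → ℝ}
    (hv : v none = Pi.single 0 1)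
    (hvol : ∀ (M : ℕ) (u : ι → Fin M → ℝ),
      volume (zonotope u) = ENNReal.ofReal (2 ^ M / M.factorial * absDetSum u)) :
    volume (zonotope v) =
      ENNReal.ofReal (2 ^ (N + 1) / (N + 1).factorial * absDetSum v) := by
  have htail : Fin.tail '' zonotope (v ∘ some) = zonotope (Fin.tail ∘ v ∘ some) :=
    image_zonotope (LinearMap.funLeft ℝ ℝ Fin.succ) _
  have hrec : (2 ^ (N + 1) / (N + 1).factorial * absDetSum v : ℝ) =
      2 ^ (N + 1) / (N + 1).factorial * absDetSum (v ∘ some) +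
        (1 - -1) * (2 ^ N / N.factorial * absDetSum (Fin.tail ∘ v ∘ some)) := by
    rw [absDetSum_option_of_eq_single hv, Nat.factorial_succ]
    push_cast
    field_simp
    ring
  have hnonneg : ∀ {M : ℕ} (u : ι → Fin M → ℝ), 0 ≤ 2 ^ M / M.factorial * absDetSum u :=
    fun u => mul_nonneg (by positivity) (absDetSum_nonneg u)
  rw [zonotope_option, hv, volume_add_image_Icc_smul_single (isCompact_zonotope _)
    (convex_zonotope _) (by norm_num), htail, hvol, hvol, hrec,
    ENNReal.ofReal_add (hnonneg _) (mul_nonneg (by norm_num) (hnonneg _)),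
    ENNReal.ofReal_mul (show (0 : ℝ) ≤ 1 - -1 by norm_num)]

theorem volume_zonotope_comp_linearMap {c : ℝ} {v : ι → n → ℝ} (T : (n → ℝ) →ₗ[ℝ] n → ℝ)
    (h : volume (zonotope v) = ENNReal.ofReal (c * absDetSum v)) :
    volume (zonotope (T ∘ v)) = ENNReal.ofReal (c * absDetSum (T ∘ v)) := by
  rw [← image_zonotope, Measure.addHaar_image_linearMap, h, absDetSum_comp_linearMap,
    ← ENNReal.ofReal_mul (abs_nonneg _), mul_left_comm]

theorem volume_zonotope {N : ℕ} (v : ι → Fin N → ℝ) :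
    volume (zonotope v) = ENNReal.ofReal (2 ^ N / N.factorial * absDetSum v) := by
  refine Fintype.induction_empty_option
    (P := fun ι _ => ∀ (N : ℕ) (v : ι → Fin N → ℝ),
      volume (zonotope v) = ENNReal.ofReal (2 ^ N / N.factorial * absDetSum v))
    (fun α β _ e ih N v => ?_) (fun N v => ?_) (fun α _ ih N v => ?_) ι N v
  · let := Fintype.ofEquiv β e.symm
    rw [← zonotope_comp_equiv e, ← absDetSum_comp_equiv e]
    convert! ih N (v ∘ e)
  · cases N with
    | zero => simpa using volume_zonotope_of_isEmpty v
    | succ N =>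
      have hsub : zonotope v ⊆ {0} := by
        rintro _ ⟨t, -, rfl⟩
        simp [Fintype.linearCombination_apply]
      rw [measure_mono_null hsub (measure_singleton 0)]
      simp [absDetSum]
  · cases N with
    | zero => simpa using volume_zonotope_of_isEmpty v
    | succ N =>
      by_cases hv : v none = 0
      · rw [absDetSum_option_of_eq_zero hv, ← ih, zonotope_option]
        simp [hv]
      · obtain ⟨T, hT⟩ := SeparatingDual.exists_continuousLinearEquiv_apply_eq (R := ℝ)
          (x := (Pi.single 0 1 : Fin (N + 1) → ℝ)) (by simp) hv
        have hsymm : (T.symm ∘ v) none = Pi.single 0 1 := by simp [← hT]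
        have := volume_zonotope_comp_linearMap T.toLinearMap
          (volume_zonotope_option_of_eq_single hsymm ih)
        simpa [Function.comp_def] using this

end ZonotopeVolume

section SupportBody

variable {ι n : Type*} [Fintype ι] [Fintype n]

/-- The convex body `{η | ⟨ξ, η⟩ ≤ h ξ for all ξ}` cut out by a function `h`; when `h` is sublinear,
it is the body with support function `h`. -/
def supportBody (h : (n → ℝ) → ℝ) : Set (n → ℝ) :=
  {η | ∀ ξ, ξ ⬝ᵥ η ≤ h ξ}

theorem supportBody_mono {h k : (n → ℝ) → ℝ} (hk : ∀ ξ, h ξ ≤ k ξ) :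
    supportBody h ⊆ supportBody k :=
  fun _ hη ξ => (hη ξ).trans (hk ξ)

theorem isClosed_supportBody (h : (n → ℝ) → ℝ) : IsClosed (supportBody h) := by
  simp only [supportBody, Set.ofPred_forall]
  exact isClosed_iInter fun ξ =>
    isClosed_le (continuous_const.dotProduct continuous_id) continuous_const

theorem volume_supportBody_ne_top (h : (n → ℝ) → ℝ) : volume (supportBody h) ≠ ⊤ := by
  classical
  have hsub : supportBody h ⊆
      Set.Icc (fun i => -h (-Pi.single i 1)) fun i => h (Pi.single i 1) := fun η hη =>
    ⟨fun i => neg_le.1 (by simpa using hη (-Pi.single i 1)),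
      fun i => by simpa using hη (Pi.single i 1)⟩
  exact measure_ne_top_of_subset hsub isCompact_Icc.measure_ne_top

theorem tendsto_volume_supportBody_add_mul (h : (n → ℝ) → ℝ) {k : (n → ℝ) → ℝ}
    (hk : ∀ ξ, 0 ≤ k ξ) :
    Tendsto (fun δ : ℝ => volume (supportBody fun ξ => h ξ + δ * k ξ)) (𝓝[>] 0)
      (𝓝 (volume (supportBody h))) := by
  have hinter : ⋂ δ > (0 : ℝ), supportBody (fun ξ => h ξ + δ * k ξ) = supportBody h := by
    refine Set.Subset.antisymm (fun η hη ξ => ?_) (Set.subset_iInter₂ fun δ hδ =>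
      supportBody_mono fun ξ => le_add_of_nonneg_right (mul_nonneg (le_of_lt hδ) (hk ξ)))
    have hlim : Tendsto (fun δ : ℝ => h ξ + δ * k ξ) (𝓝[>] 0) (𝓝 (h ξ)) := by
      have hcont : Continuous fun δ : ℝ => h ξ + δ * k ξ := by fun_prop
      simpa using (hcont.tendsto 0).mono_left nhdsWithin_le_nhds
    refine ge_of_tendsto hlim ?_
    filter_upwards [self_mem_nhdsWithin] with δ hδ
    exact Set.mem_iInter₂.1 hη δ hδ ξ
  rw [← hinter]
  refine tendsto_measure_biInter_gt (fun δ _ => (isClosed_supportBody _).nullMeasurableSet)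
    (fun δ ε _ hδε => supportBody_mono fun ξ => ?_) ⟨1, one_pos, volume_supportBody_ne_top _⟩
  gcongr
  exact hk ξ

theorem polar_sublevel_eq_supportBody {h : (n → ℝ) → ℝ} (h_nonneg : ∀ ξ, 0 ≤ h ξ)
    (h_smul : ∀ c : ℝ, 0 ≤ c → ∀ ξ, h (c • ξ) = c * h ξ) :
    {η | ∀ ξ, h ξ ≤ 1 → ξ ⬝ᵥ η ≤ 1} = supportBody h := by
  refine Set.Subset.antisymm (fun η hη ξ => le_of_forall_gt_imp_ge_of_dense fun c hc => ?_)
    fun η hη ξ hξ => (hη ξ).trans hξ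
  have hc_pos : 0 < c := (h_nonneg ξ).trans_lt hc
  have hξ : h (c⁻¹ • ξ) ≤ 1 := by
    rw [h_smul _ (inv_nonneg.2 hc_pos.le), inv_mul_le_one₀ hc_pos]
    exact hc.le
  simpa [smul_dotProduct, inv_mul_le_one₀ hc_pos] using hη _ hξ

theorem dotProduct_linearCombination (ξ : n → ℝ) (v : ι → n → ℝ) (t : ι → ℝ) :
    ξ ⬝ᵥ Fintype.linearCombination ℝ v t = ∑ j, t j * (ξ ⬝ᵥ v j) := by
  simp [Fintype.linearCombination_apply, dotProduct_sum, dotProduct_smul]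

theorem zonotope_eq_supportBody (v : ι → n → ℝ) :
    zonotope v = supportBody fun ξ => ∑ j, |ξ ⬝ᵥ v j| := by
  classical
  refine Set.Subset.antisymm ?_ fun η hη => ?_
  · rintro _ ⟨t, ht, rfl⟩ ξ
    rw [dotProduct_linearCombination]
    refine Finset.sum_le_sum fun j _ => (le_abs_self _).trans ?_
    rw [abs_mul]
    exact mul_le_of_le_one_left (abs_nonneg _) (abs_le.2 ⟨ht.1 j, ht.2 j⟩)
  · by_contra hη_notMem
    obtain ⟨φ, s, hφ, hs⟩ := geometric_hahn_banach_closed_point (convex_zonotope v)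
      (isCompact_zonotope v).isClosed hη_notMem
    obtain ⟨ξ, hξ⟩ := (dotProductEquiv ℝ n).surjective φ.toLinearMap
    have hφξ : ∀ x, φ x = ξ ⬝ᵥ x := fun x => (LinearMap.congr_fun hξ x).symm
    -- The sign vector maximises `⟨ξ, ·⟩` over the zonotope.
    let t : ι → ℝ := fun j => SignType.sign (ξ ⬝ᵥ v j)
    have ht : t ∈ Set.Icc (-1) 1 := by
      constructor <;> intro j <;> cases h : SignType.sign (ξ ⬝ᵥ v j) <;> simp [t, h]
    have hlt := hφ _ ⟨t, ht, rfl⟩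
    simp only [hφξ, dotProduct_linearCombination, t, sign_mul_self] at hlt hs
    exact (hlt.trans hs).not_ge (hη ξ)

end SupportBody

section Perturbation

variable {ι κ n : Type*} [Fintype ι] [Fintype κ] [Fintype n] [DecidableEq n]

theorem abs_det_le_factorial_mul_prod_norm (v : n → n → ℝ) :
    |(Matrix.of v).det| ≤ (Fintype.card n).factorial * ∏ i, ‖v i‖ := by
  rw [← Matrix.det_transpose, Matrix.det_apply, ← Fintype.card_perm, ← nsmul_eq_mul,
    ← Finset.card_univ]
  refine (Finset.abs_sum_le_sum_abs _ _).trans (Finset.sum_le_card_nsmul _ _ _ fun σ _ => ?_)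
  rw [Units.smul_def, zsmul_eq_mul, abs_mul, Finset.abs_prod]
  have hsign : |((Equiv.Perm.sign σ : ℤ) : ℝ)| = 1 := by
    rcases Int.units_eq_one_or (Equiv.Perm.sign σ) with h | h <;> simp [h]
  rw [hsign, one_mul]
  exact Finset.prod_le_prod (fun _ _ => abs_nonneg _) fun i _ => norm_le_pi_norm (v i) (σ i)

theorem absDetSum_sumElim_le (w : ι → n → ℝ) (u : κ → n → ℝ) :
    absDetSum (Sum.elim w u) ≤ absDetSum w + (Fintype.card n).factorial *
      ((∑ j, ‖w j‖ + ∑ j, ‖u j‖) ^ Fintype.card n - (∑ j, ‖w j‖) ^ Fintype.card n) := by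
  let bound (f : n → ι ⊕ κ) : ℝ := (Fintype.card n).factorial * ∏ i, ‖Sum.elim w u (f i)‖
  let defect (f : n → ι ⊕ κ) : ℝ := bound f - |(Matrix.of (Sum.elim w u ∘ f)).det|
  have hdefect : ∑ g : n → ι, defect (Sum.inl ∘ g) ≤ ∑ f, defect f :=
    (Finset.sum_map Finset.univ ⟨(Sum.inl ∘ ·), Sum.inl_injective.comp_left⟩
      defect).symm.trans_le (Finset.sum_le_univ_sum_of_nonneg fun f =>
        sub_nonneg.2 (abs_det_le_factorial_mul_prod_norm _))
  have hbound : ∑ f, bound f =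
      (Fintype.card n).factorial * (∑ j, ‖w j‖ + ∑ j, ‖u j‖) ^ Fintype.card n := by
    simp only [bound]
    rw [← Finset.mul_sum, ← Fintype.prod_sum fun _ : n => fun j => ‖Sum.elim w u j‖]
    simp
  have hbound_inl : ∑ g : n → ι, bound (Sum.inl ∘ g) =
      (Fintype.card n).factorial * (∑ j, ‖w j‖) ^ Fintype.card n := by
    simp only [bound, Function.comp_apply, Sum.elim_inl]
    rw [← Finset.mul_sum, ← Fintype.prod_sum fun _ : n => fun j => ‖w j‖]
    simp
  simp only [defect, Finset.sum_sub_distrib, hbound, hbound_inl, ← Function.comp_assoc,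
    Sum.elim_comp_inl] at hdefect
  simp only [absDetSum]
  linarith

end Perturbation

section ZonoidSupport

variable {X n : Type*} [MeasurableSpace X] [Fintype n] {ν : Measure X} {f g : X → n → ℝ}

/-- The `L¹` norm of the combination `⟨ξ, f⟩` of the components of `f`, as a function of `ξ`; it is
the support function of the zonoid `∫ [-f x, f x] dν(x)`. -/
noncomputable def zonoidSupport (ν : Measure X) (f : X → n → ℝ) (ξ : n → ℝ) : ℝ :=
  ∫ x, |ξ ⬝ᵥ f x| ∂ν

theorem zonoidSupport_nonneg (ξ : n → ℝ) : 0 ≤ zonoidSupport ν f ξ :=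
  integral_nonneg fun _ => abs_nonneg _

theorem zonoidSupport_smul {c : ℝ} (hc : 0 ≤ c) (ξ : n → ℝ) :
    zonoidSupport ν f (c • ξ) = c * zonoidSupport ν f ξ := by
  simp only [zonoidSupport, smul_dotProduct, smul_eq_mul, abs_mul, abs_of_nonneg hc,
    integral_const_mul]

theorem abs_dotProduct_le (ξ v : n → ℝ) : |ξ ⬝ᵥ v| ≤ ‖v‖ * ∑ i, |ξ i| := by
  rw [dotProduct, Finset.mul_sum]
  refine (Finset.abs_sum_le_sum_abs _ _).trans (Finset.sum_le_sum fun i _ => ?_)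
  rw [abs_mul, mul_comm]
  gcongr
  exact norm_le_pi_norm v i

theorem integrable_abs_dotProduct (hf : Integrable f ν) (ξ : n → ℝ) :
    Integrable (fun x => |ξ ⬝ᵥ f x|) ν :=
  (integrable_finsetSum _ fun i _ => (hf.eval i).const_mul (ξ i)).abs

theorem zonoidSupport_le_add (hf : Integrable f ν) (hg : Integrable g ν) (ξ : n → ℝ) :
    zonoidSupport ν f ξ ≤ zonoidSupport ν g ξ + (∫ x, ‖f x - g x‖ ∂ν) * ∑ i, |ξ i| := by
  have hfg : Integrable (fun x => ‖f x - g x‖ * ∑ i, |ξ i|) ν := (hf.sub hg).norm.mul_const _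
  rw [← integral_mul_const, zonoidSupport, zonoidSupport,
    ← integral_add (integrable_abs_dotProduct hg ξ) hfg]
  refine integral_mono (integrable_abs_dotProduct hf ξ)
    ((integrable_abs_dotProduct hg ξ).add hfg) fun x => ?_
  calc |ξ ⬝ᵥ f x| = |ξ ⬝ᵥ g x + ξ ⬝ᵥ (f x - g x)| := by rw [dotProduct_sub, add_sub_cancel]
    _ ≤ |ξ ⬝ᵥ g x| + |ξ ⬝ᵥ (f x - g x)| := abs_add_le _ _
    _ ≤ |ξ ⬝ᵥ g x| + ‖f x - g x‖ * ∑ i, |ξ i| := by gcongr; exact abs_dotProduct_le _ _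

end ZonoidSupport

section SimpleFunc

variable {X E : Type*} [MeasurableSpace X] [NormedAddCommGroup E]
  {ν : Measure X} {f : SimpleFunc X E}

theorem integral_pi_comp_simpleFunc [SigmaFinite ν] {n : Type*} [Fintype n] [DecidableEq n]
    (hf : Integrable f ν) {φ : (n → E) → ℝ} (hφ : ∀ w i, w i = 0 → φ w = 0) :
    ∫ x : n → X, φ (f ∘ x) ∂Measure.pi (fun _ => ν) =
      ∑ g : n → f.range, (∏ i, ν.real (f ⁻¹' {(g i).1})) * φ (fun i => g i) := by
  let χ (v : f.range) : X → ℝ := (f ⁻¹' {v.1}).indicator 1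
  have hpoint : ∀ x : n → X, φ (f ∘ x) =
      ∑ g : n → f.range, (∏ i, χ (g i) (x i)) * φ (fun i => g i) := by
    intro x
    rw [Finset.sum_eq_single fun i => ⟨f (x i), f.mem_range_self _⟩]
    · simp [χ, Function.comp_def]
    · intro g _ hg
      obtain ⟨i, hi⟩ := Function.ne_iff.1 hg
      rw [Finset.prod_eq_zero (Finset.mem_univ i), zero_mul]
      exact Set.indicator_of_notMem (fun h => hi (Subtype.ext h.symm)) _
    · simp
  have hχ : ∀ v : f.range, v.1 ≠ 0 → Integrable (χ v) ν := fun v hv =>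
    (integrable_indicator_iff (f.measurableSet_fiber _)).2
      (integrableOn_const (SimpleFunc.measure_preimage_lt_top_of_integrable f hf hv).ne)
  have hint : ∀ g : n → f.range,
      Integrable (fun x : n → X => (∏ i, χ (g i) (x i)) * φ (fun i => g i))
        (Measure.pi fun _ => ν) := by
    intro g
    by_cases hg : ∃ i, (g i).1 = 0
    · obtain ⟨i, hi⟩ := hg
      simp [hφ (fun i => g i) i hi]
    · push Not at hg
      exact (Integrable.fintype_prod fun i => hχ _ (hg i)).mul_const _
  simp_rw [hpoint]
  rw [integral_finsetSum _ fun g _ => hint g]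
  refine Finset.sum_congr rfl fun g _ => ?_
  rw [integral_mul_const, integral_fintype_prod_eq_prod]
  simp [χ, integral_indicator_one (f.measurableSet_fiber _)]

variable [NormedSpace ℝ E]

/-- The fibre of the simple function `f` over each of its values `v`, recorded as the vector `v`
scaled by the measure of the fibre. A fibre of infinite measure counts as having measure `0`; when
`f` is integrable this can only happen at `v = 0`, where it makes no difference. -/
noncomputable def fiberVector (ν : Measure X) (f : SimpleFunc X E) (v : f.range) : E :=
  ν.real (f ⁻¹' {v.1}) • v.1

theorem integral_comp_simpleFunc (hf : Integrable f ν) {φ : E → ℝ}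
    (hφ : ∀ c : ℝ, 0 ≤ c → ∀ v, φ (c • v) = c * φ v) :
    ∫ x, φ (f x) ∂ν = ∑ v, φ (fiberVector ν f v) := by
  have hφ0 : φ 0 = 0 := by simpa using hφ 0 le_rfl 0
  have hint : Integrable (f.map φ) ν :=
    SimpleFunc.integrable_iff_finMeasSupp.2
      ((SimpleFunc.integrable_iff_finMeasSupp.1 hf).map hφ0)
  calc ∫ x, φ (f x) ∂ν = ∑ v ∈ f.range, ν.real (f ⁻¹' {v}) • φ v :=
        (SimpleFunc.integral_eq_integral _ hint).symm.trans (SimpleFunc.map_integral f φ hf hφ0)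
    _ = ∑ v, φ (fiberVector ν f v) := by
        rw [← Finset.sum_coe_sort]
        simp [fiberVector, hφ]

theorem integral_norm_simpleFunc (hf : Integrable f ν) :
    ∫ x, ‖f x‖ ∂ν = ∑ v, ‖fiberVector ν f v‖ :=
  integral_comp_simpleFunc hf fun c hc v => by rw [norm_smul, Real.norm_of_nonneg hc]

theorem zonoidSupport_simpleFunc {n : Type*} [Fintype n] {f : SimpleFunc X (n → ℝ)}
    (hf : Integrable f ν) (ξ : n → ℝ) :
    zonoidSupport ν f ξ = ∑ v, |ξ ⬝ᵥ fiberVector ν f v| :=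
  integral_comp_simpleFunc (φ := fun v => |ξ ⬝ᵥ v|) hf fun c hc v => by
    rw [dotProduct_smul, smul_eq_mul, abs_mul, abs_of_nonneg hc]

end SimpleFunc

section AbsDetIntegral

variable {X n : Type*} [MeasurableSpace X] [Fintype n] [DecidableEq n] {ν : Measure X}

/-- The integral over `x ∈ X ^ n` of `|det (f (x i))|`, the continuous analogue of `absDetSum`;
the matrix has the vectors `f (x i)` as its rows. -/
noncomputable def absDetIntegral (ν : Measure X) (f : X → n → ℝ) : ℝ :=
  ∫ x : n → X, |(Matrix.of (f ∘ x)).det| ∂Measure.pi fun _ => ν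

theorem absDetIntegral_simpleFunc [SigmaFinite ν] {f : SimpleFunc X (n → ℝ)}
    (hf : Integrable f ν) : absDetIntegral ν f = absDetSum (fiberVector ν f) := by
  rw [absDetIntegral, integral_pi_comp_simpleFunc (φ := fun w => |(Matrix.of w).det|) hf
    fun w i hi => abs_eq_zero.2 (Matrix.det_eq_zero_of_row_eq_zero i (congrFun hi))]
  refine Finset.sum_congr rfl fun g _ => ?_
  have hdet := Matrix.det_mul_column (fun i => ν.real (f ⁻¹' {(g i).1}))
    (Matrix.of fun i => (g i).1)
  rw [← Finset.prod_congr rfl fun i _ => abs_of_nonneg (measureReal_nonneg (μ := ν)),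
    ← Finset.abs_prod, ← abs_mul, ← hdet]
  rfl

theorem exists_simpleFunc_tendsto_ae {E : Type*} [NormedAddCommGroup E]
    [SecondCountableTopology E] [MeasurableSpace E] [BorelSpace E] {f : X → E}
    (hf : AEMeasurable f ν) :
    ∃ G : ℕ → SimpleFunc X E, (∀ k, ∀ᵐ x ∂ν, ‖G k x‖ ≤ 2 * ‖f x‖) ∧
      ∀ᵐ x ∂ν, Tendsto (fun k => G k x) atTop (𝓝 (f x)) := by
  refine ⟨SimpleFunc.approxOn (hf.mk f) hf.measurable_mk Set.univ 0 trivial, fun k => ?_, ?_⟩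
  · filter_upwards [hf.ae_eq_mk] with x hx
    rw [hx, two_mul]
    exact SimpleFunc.norm_approxOn_zero_le _ (Set.mem_univ 0) x k
  · filter_upwards [hf.ae_eq_mk] with x hx
    rw [hx]
    exact SimpleFunc.tendsto_approxOn _ (Set.mem_univ 0) (by simp)

theorem tendsto_absDetIntegral [SigmaFinite ν] {f : X → n → ℝ} {G : ℕ → X → n → ℝ}
    {b : X → ℝ} (hb : Integrable b ν) (hG : ∀ k, AEMeasurable (G k) ν)
    (hbound : ∀ k, ∀ᵐ x ∂ν, ‖G k x‖ ≤ b x)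
    (hlim : ∀ᵐ x ∂ν, Tendsto (fun k => G k x) atTop (𝓝 (f x))) :
    Tendsto (fun k => absDetIntegral ν (G k)) atTop (𝓝 (absDetIntegral ν f)) := by
  have hpi : ∀ {p : X → Prop}, (∀ᵐ x ∂ν, p x) →
      ∀ᵐ x ∂Measure.pi fun _ : n => ν, ∀ i, p (x i) := fun hp =>
    ae_all_iff.2 fun i => (Measure.quasiMeasurePreserving_eval _ i).ae hp
  have hdet : Continuous fun w : n → n → ℝ => |(Matrix.of w).det| :=
    (Continuous.matrix_det continuous_id).abs
  refine tendsto_integral_of_dominated_convergence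
    (fun x => (Fintype.card n).factorial * ∏ i, b (x i)) (fun k => ?_) ?_ (fun k => ?_) ?_
  · exact hdet.comp_aestronglyMeasurable (aemeasurable_pi_iff.2 fun i =>
      (hG k).comp_quasiMeasurePreserving
        (Measure.quasiMeasurePreserving_eval _ i)).aestronglyMeasurable
  · exact (Integrable.fintype_prod fun _ => hb).const_mul _
  · filter_upwards [hpi (hbound k)] with x hx
    rw [Real.norm_of_nonneg (abs_nonneg _)]
    refine (abs_det_le_factorial_mul_prod_norm _).trans ?_
    gcongr with i
    exact hx i
  · filter_upwards [hpi hlim] with x hx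
    exact (hdet.tendsto _).comp (tendsto_pi_nhds.2 hx)

theorem exists_simpleFunc_tendsto_absDetIntegral [SigmaFinite ν] {f : X → n → ℝ}
    (hf : Integrable f ν) :
    ∃ G : ℕ → SimpleFunc X (n → ℝ), (∀ k, Integrable (G k) ν) ∧
      Tendsto (fun k => ∫ x, ‖f x - G k x‖ ∂ν) atTop (𝓝 0) ∧
      Tendsto (fun k => ∫ x, ‖G k x‖ ∂ν) atTop (𝓝 (∫ x, ‖f x‖ ∂ν)) ∧
      Tendsto (fun k => absDetIntegral ν (G k)) atTop (𝓝 (absDetIntegral ν f)) := by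
  obtain ⟨G, hbound, hlim⟩ := exists_simpleFunc_tendsto_ae hf.aemeasurable
  have hb : Integrable (fun x => 2 * ‖f x‖) ν := hf.norm.const_mul 2
  have hG : ∀ k, Integrable (G k) ν := fun k =>
    hb.mono' (G k).aestronglyMeasurable (hbound k)
  refine ⟨G, hG, ?_, ?_, tendsto_absDetIntegral hb (fun k => (G k).aemeasurable) hbound hlim⟩
  · rw [← integral_zero X ℝ (μ := ν)]
    refine tendsto_integral_of_dominated_convergence (fun x => ‖f x‖ + 2 * ‖f x‖)
      (fun k => (hf.sub (hG k)).norm.aestronglyMeasurable) (hf.norm.add hb) (fun k => ?_) ?_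
    · filter_upwards [hbound k] with x hx
      rw [norm_norm]
      exact (norm_sub_le _ _).trans (by gcongr)
    · filter_upwards [hlim] with x hx
      simpa using (hx.const_sub (f x)).norm
  · refine tendsto_integral_of_dominated_convergence _
      (fun k => (hG k).norm.aestronglyMeasurable) hb (fun k => ?_) ?_
    · filter_upwards [hbound k] with x hx
      rwa [norm_norm]
    · filter_upwards [hlim] with x hx
      exact hx.norm

end AbsDetIntegral

section VolumeSupportBody

variable {X : Type*} [MeasurableSpace X] {ν : Measure X} [SigmaFinite ν] {N : ℕ}

theorem volume_supportBody_simpleFunc {f : SimpleFunc X (Fin N → ℝ)} (hf : Integrable f ν) :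
    volume (supportBody (zonoidSupport ν f)) =
      ENNReal.ofReal (2 ^ N / N.factorial * absDetIntegral ν f) := by
  rw [absDetIntegral_simpleFunc hf, ← volume_zonotope, zonotope_eq_supportBody,
    funext (zonoidSupport_simpleFunc hf)]

theorem volume_supportBody_simpleFunc_add_mul_le {f : SimpleFunc X (Fin N → ℝ)}
    (hf : Integrable f ν) {δ : ℝ} (hδ : 0 ≤ δ) :
    volume (supportBody fun ξ => zonoidSupport ν f ξ + δ * ∑ i, |ξ i|) ≤
      ENNReal.ofReal (2 ^ N / N.factorial * (absDetIntegral ν f + N.factorial *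
        ((∫ x, ‖f x‖ ∂ν + N * δ) ^ N - (∫ x, ‖f x‖ ∂ν) ^ N))) := by
  let w := Sum.elim (fiberVector ν f) fun i => (Pi.single i δ : Fin N → ℝ)
  have hw : (fun ξ => zonoidSupport ν f ξ + δ * ∑ i, |ξ i|) = fun ξ => ∑ j, |ξ ⬝ᵥ w j| := by
    ext ξ
    simp [w, zonoidSupport_simpleFunc hf, abs_mul, abs_of_nonneg hδ, Finset.mul_sum, mul_comm]
  have hle := absDetSum_sumElim_le (fiberVector ν f) fun i => (Pi.single i δ : Fin N → ℝ)
  simp only [← integral_norm_simpleFunc hf, ← absDetIntegral_simpleFunc hf, Pi.norm_single,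
    Real.norm_of_nonneg hδ, Finset.sum_const, Finset.card_univ, Fintype.card_fin,
    nsmul_eq_mul] at hle
  rw [hw, ← zonotope_eq_supportBody, volume_zonotope]
  gcongr

theorem volume_supportBody_zonoidSupport_le {f : X → Fin N → ℝ} (hf : Integrable f ν) :
    volume (supportBody (zonoidSupport ν f)) ≤
      ENNReal.ofReal (2 ^ N / N.factorial * absDetIntegral ν f) := by
  obtain ⟨G, hG, hδ, hnorm, hlim⟩ := exists_simpleFunc_tendsto_absDetIntegral hf
  have herror : Tendsto (fun k => (∫ x, ‖G k x‖ ∂ν + N * ∫ x, ‖f x - G k x‖ ∂ν) ^ N -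
      (∫ x, ‖G k x‖ ∂ν) ^ N) atTop (𝓝 0) := by
    simpa using ((hnorm.add (hδ.const_mul (N : ℝ))).pow N).sub (hnorm.pow N)
  have hrhs := ENNReal.tendsto_ofReal
    ((hlim.add (herror.const_mul (N.factorial : ℝ))).const_mul (2 ^ N / N.factorial : ℝ))
  rw [mul_zero, add_zero] at hrhs
  refine ge_of_tendsto' hrhs fun k => ?_
  exact (measure_mono (supportBody_mono (zonoidSupport_le_add hf (hG k)))).trans
    (volume_supportBody_simpleFunc_add_mul_le (hG k) (integral_nonneg fun _ => norm_nonneg _))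

theorem le_volume_supportBody_zonoidSupport {f : X → Fin N → ℝ} (hf : Integrable f ν) :
    ENNReal.ofReal (2 ^ N / N.factorial * absDetIntegral ν f) ≤
      volume (supportBody (zonoidSupport ν f)) := by
  obtain ⟨G, hG, hδ, -, hlim⟩ := exists_simpleFunc_tendsto_absDetIntegral hf
  have hnonneg : ∀ ξ : Fin N → ℝ, 0 ≤ ∑ i, |ξ i| := fun ξ =>
    Finset.sum_nonneg fun i _ => abs_nonneg _
  refine ge_of_tendsto (tendsto_volume_supportBody_add_mul _ hnonneg) ?_
  filter_upwards [self_mem_nhdsWithin] with δ hδ_pos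
  refine le_of_tendsto (ENNReal.tendsto_ofReal (hlim.const_mul (2 ^ N / N.factorial : ℝ))) ?_
  filter_upwards [hδ.eventually_le_const hδ_pos] with k hk
  rw [← volume_supportBody_simpleFunc (hG k)]
  refine measure_mono (supportBody_mono fun ξ => (zonoidSupport_le_add (hG k) hf ξ).trans ?_)
  simp only [norm_sub_rev (G k _)]
  gcongr

theorem volume_supportBody_zonoidSupport {f : X → Fin N → ℝ} (hf : Integrable f ν) :
    volume (supportBody (zonoidSupport ν f)) =
      ENNReal.ofReal (2 ^ N / N.factorial * absDetIntegral ν f) :=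
  (volume_supportBody_zonoidSupport_le hf).antisymm (le_volume_supportBody_zonoidSupport hf)

end VolumeSupportBody

theorem stmt8_general {X : Type*} [MeasurableSpace X] (ν : Measure X) [SigmaFinite ν]
    (N : ℕ) (F : Fin N → X → ℝ) (hF : ∀ n, Integrable (F n) ν)
    (B : Set (Fin N → ℝ)) (hB : B = {ξ | (∫ x, |∑ n, ξ n * F n x| ∂ν) ≤ 1})
    (Bstar : Set (Fin N → ℝ))
    (hBstar : Bstar = {η | ∀ ξ ∈ B, (∑ i, ξ i * η i) ≤ 1}) :
    volume Bstar = ENNReal.ofReal ((2 ^ N / (N.factorial : ℝ)) *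
      ∫ x : Fin N → X, |Matrix.det (Matrix.of fun l n => F l (x n))|
        ∂(Measure.pi fun _ => ν)) := by
  let f : X → Fin N → ℝ := fun x n => F n x
  have hf : Integrable f ν := Integrable.of_eval hF
  have hpolar : Bstar = supportBody (zonoidSupport ν f) := by
    rw [hBstar, hB]
    exact polar_sublevel_eq_supportBody zonoidSupport_nonneg fun c hc => zonoidSupport_smul hc
  have hdet : ∀ x : Fin N → X,
      (Matrix.of fun l n => F l (x n)).det = (Matrix.of (f ∘ x)).det := fun x =>
    (Matrix.det_transpose _).symm
  simp_rw [hpolar, hdet]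
  exact volume_supportBody_zonoidSupport hf

/-- Theorem 3: the volume of the dual unit ball `B*` of the norm
`ξ ↦ ‖∑ ξ n F n‖₁` equals `(2^N / N!) ∫_{X^N} |Δ(F₁,…,F_N;x)| dν^N(x)`. -/
theorem stmt8 {X : Type*} [MeasurableSpace X] (ν : Measure X) [SigmaFinite ν]
    (N : ℕ) (F : Fin N → X → ℝ) (hF : ∀ n, Integrable (F n) ν)
    (hind : ∀ ξ : Fin N → ℝ, (∫ x, |∑ n, ξ n * F n x| ∂ν) = 0 → ξ = 0)
    (B : Set (Fin N → ℝ)) (hB : B = {ξ | (∫ x, |∑ n, ξ n * F n x| ∂ν) ≤ 1})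
    (Bstar : Set (Fin N → ℝ))
    (hBstar : Bstar = {η | ∀ ξ ∈ B, (∑ i, ξ i * η i) ≤ 1}) :
    volume Bstar = ENNReal.ofReal ((2 ^ N / (N.factorial : ℝ)) *
      ∫ x : Fin N → X, |Matrix.det (Matrix.of fun l n => F l (x n))|
        ∂(Measure.pi fun _ => ν)) :=
  stmt8_general ν N F hF B hB Bstar hBstar
end

section
/- Let $F_1,\dots,F_N$ be $\mathbb{R}$-linearly independent functions in $L^1(X,\nu)$ and let $T(\xi)=\sum_{n=1}^N \xi_n F_n$. Then there exist linearly independent points $b_1,\dots,b_N$ in $\mathbb{Z}^N$ such that $\prod_{n=1}^N \|T(b_n)\|_1 \le \int_{X^N} |\Delta(F_1,\dots,F_N;\mathbf{x})|\,d\nu^N(\mathbf{x})$, and the $\mathbb{Z}$-module generated by $b_1,\dots,b_N$ has index at most $N!$ in $\mathbb{Z}^N$. -/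
open MeasureTheory

/-!
By independence, `ξ ↦ ‖T(ξ)‖₁` is a norm on `ℝ^N`; let `B` be its unit ball. The result combines two
inequalities and a comparison of volumes.

Minkowski's second theorem provides independent integer points `bₙ` with
`∏ ‖T(bₙ)‖₁ · vol B ≤ 2^N`. Starting from a ball of radius half the largest minimum, one contracts
the slices along the flag spanned by the first minima, one subspace at a time. The contracted set
still has distinct translates under the lattice, and its volume is `∏ ‖T(bₙ)‖₁ · vol B / 2^N`.

Reisner's inequality gives `2^N ≤ vol B · ∫ |Δ|`: the zonoid polar to `B` has volume
`2^N / N! · ∫ |Δ|`. In terms of `J = ∫ exp (-‖T(ξ)‖₁) dξ = N! · vol B`, it is proved by induction on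
`N`. For fixed `x₁`, Gaussian elimination reduces `Δ` to a determinant of order `N - 1`, attached to
the hyperplane `∑ ξₙ Fₙ(x₁) = 0`. The integral of `exp (-‖T(ξ)‖₁)` over the translates of this
hyperplane is an even log-concave function `g` on the line, by the inequality of Prékopa and
Leindler, so that `2 g(0) ∫ |t| g(t) dt ≤ (∫ g)²`. Integrate over `x₁` and use
`∫ ‖T(ξ)‖₁ exp (-‖T(ξ)‖₁) dξ = N · J`.

Finally `B` contains the cross-polytope with vertices `± bₙ / ‖T(bₙ)‖₁`, whose volume is
`2^N · index / (N! · ∏ ‖T(bₙ)‖₁)`, so Minkowski's upper bound forces the index to be at most `N!`.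
-/

open ENNReal NNReal Pointwise

open Module Metric Nat

lemma volume_add_volume_le_volume_add_of_isCompact {A B : Set ℝ} (hA : IsCompact A)
    (hB : IsCompact B) (hA₀ : A.Nonempty) (hB₀ : B.Nonempty) :
    volume A + volume B ≤ volume (A + B) := by
  obtain ⟨a, haA, ha⟩ := hA.exists_isGreatest hA₀
  obtain ⟨b, hbB, hb⟩ := hB.exists_isLeast hB₀
  have hsub : (b +ᵥ A) ∪ (a +ᵥ B) ⊆ A + B := by
    rintro z (⟨x, hx, rfl⟩ | ⟨y, hy, rfl⟩)
    · simpa only [vadd_eq_add, add_comm b x] using Set.add_mem_add hx hbB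
    · exact Set.add_mem_add haA hy
  have hdisj : AEDisjoint volume (b +ᵥ A) (a +ᵥ B) := by
    refine measure_mono_null (t := {a + b}) ?_ (measure_singleton _)
    rintro z ⟨⟨x, hx, rfl⟩, ⟨y, hy, hxy⟩⟩
    have hxa := ha hx
    have hby := hb hy
    simp only [vadd_eq_add, Set.mem_singleton_iff] at hxy ⊢
    linarith
  calc volume A + volume B = volume ((b +ᵥ A) ∪ (a +ᵥ B)) := by
        rw [measure_union₀ (hB.vadd a).measurableSet.nullMeasurableSet hdisj,
          measure_vadd, measure_vadd]
    _ ≤ volume (A + B) := measure_mono hsub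

lemma volume_add_volume_le_volume_add {A B : Set ℝ} (hA : MeasurableSet A)
    (hB : MeasurableSet B) (hA₀ : A.Nonempty) (hB₀ : B.Nonempty) :
    volume A + volume B ≤ volume (A + B) := by
  obtain ⟨a, ha⟩ := hA₀
  obtain ⟨b, hb⟩ := hB₀
  rcases eq_or_ne (volume A) 0 with hA0 | hA0
  · rw [hA0, zero_add, ← measure_vadd volume a B]
    exact measure_mono (Set.vadd_set_subset_iff.2 fun y hy => Set.add_mem_add ha hy)
  rcases eq_or_ne (volume B) 0 with hB0 | hB0
  · rw [hB0, add_zero, ← measure_vadd volume b A, add_comm A B]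
    exact measure_mono (Set.vadd_set_subset_iff.2 fun x hx => Set.add_mem_add hb hx)
  refine le_of_forall_lt fun c hc => ?_
  obtain ⟨r, hr, s, hs, hrs⟩ := ENNReal.exists_lt_add_of_lt_add hc hA0 hB0
  obtain ⟨K, hKA, hK, hrK⟩ := hA.exists_lt_isCompact hr
  obtain ⟨K', hKB, hK', hsK'⟩ := hB.exists_lt_isCompact hs
  calc c < r + s := hrs
    _ ≤ volume K + volume K' := add_le_add hrK.le hsK'.le
    _ ≤ volume (K + K') := volume_add_volume_le_volume_add_of_isCompact hK hK'
        (nonempty_of_measure_ne_zero (bot_le.trans_lt hrK).ne')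
        (nonempty_of_measure_ne_zero (bot_le.trans_lt hsK').ne')
    _ ≤ volume (A + B) := measure_mono (Set.add_subset_add hKA hKB)

section PrekopaLeindler

variable {a b : ℝ≥0}

lemma volume_superlevel_le_of_rpow_mul_rpow_le {f g h : ℝ → ℝ≥0} (hf : Measurable f)
    (hg : Measurable g) (ha : 0 < a) (hb : 0 < b) (hab : a + b = 1)
    (H : ∀ x y, f x ^ (a : ℝ) * g y ^ (b : ℝ) ≤ h (a * x + b * y)) {t : ℝ≥0}
    (hft : ∃ x, t < f x) (hgt : ∃ y, t < g y) :
    a * volume {x | t < f x} + b * volume {x | t < g x} ≤ volume {x | t < h x} := by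
  have hsmul (c : ℝ≥0) (s : Set ℝ) : c * volume s = volume ((c : ℝ) • s) := by
    simp [Measure.addHaar_smul]
  rw [hsmul, hsmul]
  refine (volume_add_volume_le_volume_add ((measurableSet_lt measurable_const hf).const_smul₀ _)
    ((measurableSet_lt measurable_const hg).const_smul₀ _) (Set.Nonempty.smul_set hft)
    (Set.Nonempty.smul_set hgt)).trans (measure_mono ?_)
  rintro _ ⟨_, ⟨x, hx, rfl⟩, _, ⟨y, hy, rfl⟩, rfl⟩
  calc t = t ^ (a : ℝ) * t ^ (b : ℝ) := by
        rw [← NNReal.rpow_add_of_nonneg _ a.coe_nonneg b.coe_nonneg, ← NNReal.coe_add, hab,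
          NNReal.coe_one, NNReal.rpow_one]
    _ < f x ^ (a : ℝ) * g y ^ (b : ℝ) := by
        gcongr
        · exact hx
        · exact hy
    _ ≤ h (a * x + b * y) := H x y

lemma lintegral_coe_eq_lintegral_volume_superlevel {f : ℝ → ℝ≥0} (hf : Measurable f) :
    ∫⁻ x, f x = ∫⁻ t in Set.Ioi (0 : ℝ), volume {x | t < f x} := by
  simpa only [ENNReal.ofReal_coe_nnreal] using lintegral_eq_lintegral_meas_lt volume
    (.of_forall fun x => (f x).coe_nonneg) hf.coe_nnreal_real.aemeasurable

lemma add_lintegral_le_of_isLUB_one {f g h : ℝ → ℝ≥0} (hf : Measurable f) (hg : Measurable g)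
    (hh : Measurable h) (ha : 0 < a) (hb : 0 < b) (hab : a + b = 1)
    (hf₁ : IsLUB (Set.range f) 1) (hg₁ : IsLUB (Set.range g) 1)
    (H : ∀ x y, f x ^ (a : ℝ) * g y ^ (b : ℝ) ≤ h (a * x + b * y)) :
    a * (∫⁻ x, f x) + b * ∫⁻ x, g x ≤ ∫⁻ x, h x := by
  have hanti (k : ℝ → ℝ≥0) : Measurable fun t : ℝ => volume {x | t < k x} :=
    Antitone.measurable fun s t hst => measure_mono fun x hx => hst.trans_lt hx
  rw [lintegral_coe_eq_lintegral_volume_superlevel hf,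
    lintegral_coe_eq_lintegral_volume_superlevel hg,
    lintegral_coe_eq_lintegral_volume_superlevel hh, ← lintegral_const_mul _ (hanti f),
    ← lintegral_const_mul _ (hanti g), ← lintegral_add_left ((hanti f).const_mul _)]
  refine setLIntegral_mono' measurableSet_Ioi fun t (ht : 0 < t) => ?_
  lift t to ℝ≥0 using ht.le
  simp only [NNReal.coe_lt_coe]
  rcases lt_or_ge t 1 with ht₁ | ht₁
  · refine volume_superlevel_le_of_rpow_mul_rpow_le hf hg ha hb hab H ?_ ?_
    · simpa using (lt_isLUB_iff hf₁).1 ht₁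
    · simpa using (lt_isLUB_iff hg₁).1 ht₁
  · have hempty {k : ℝ → ℝ≥0} (hk : IsLUB (Set.range k) 1) : {x | t < k x} = ∅ :=
      Set.eq_empty_of_forall_notMem fun x =>
        not_lt.2 ((hk.1 (Set.mem_range_self x)).trans ht₁)
    simp [hempty hf₁, hempty hg₁]

lemma rpow_mul_rpow_eq_self (hab : a + b = 1) (x : ℝ≥0∞) : x ^ (a : ℝ) * x ^ (b : ℝ) = x := by
  rw [← ENNReal.rpow_add_of_nonneg _ _ a.coe_nonneg b.coe_nonneg, ← NNReal.coe_add, hab,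
    NNReal.coe_one, ENNReal.rpow_one]

lemma rpow_mul_rpow_le_add (ha : 0 < a) (hb : 0 < b) (hab : a + b = 1) (x y : ℝ≥0∞) :
    x ^ (a : ℝ) * y ^ (b : ℝ) ≤ a * x + b * y := by
  induction x with
  | top => simp [ha.ne']
  | coe x =>
    induction y with
    | top => simp [hb.ne']
    | coe y =>
      rw [← ENNReal.coe_rpow_of_nonneg _ a.coe_nonneg, ← ENNReal.coe_rpow_of_nonneg _ b.coe_nonneg]
      exact_mod_cast NNReal.geom_mean_le_arith_mean2_weighted a b x y hab

lemma lintegral_rpow_mul_lintegral_rpow_le_of_bddAbove {f g h : ℝ → ℝ≥0} (hf : Measurable f)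
    (hg : Measurable g) (hh : Measurable h) (ha : 0 < a) (hb : 0 < b) (hab : a + b = 1)
    (hfb : BddAbove (Set.range f)) (hgb : BddAbove (Set.range g))
    (H : ∀ x y, f x ^ (a : ℝ) * g y ^ (b : ℝ) ≤ h (a * x + b * y)) :
    (∫⁻ x, f x) ^ (a : ℝ) * (∫⁻ x, g x) ^ (b : ℝ) ≤ ∫⁻ x, h x := by
  have hzero {k : ℝ → ℝ≥0} (hk : BddAbove (Set.range k)) (h0 : ⨆ x, k x = 0) (x : ℝ) : k x = 0 :=
    le_antisymm (h0 ▸ le_ciSup hk x) zero_le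
  rcases eq_or_ne (⨆ x, f x) 0 with hA | hA
  · simp [hzero hfb hA, ENNReal.zero_rpow_of_pos, ha]
  rcases eq_or_ne (⨆ x, g x) 0 with hB | hB
  · simp [hzero hgb hB, ENNReal.zero_rpow_of_pos, hb]
  set A := ⨆ x, f x
  set B := ⨆ x, g x
  set C := A ^ (a : ℝ) * B ^ (b : ℝ)
  have hC : C ≠ 0 := mul_ne_zero (NNReal.rpow_pos hA.bot_lt).ne' (NNReal.rpow_pos hB.bot_lt).ne'
  have hlub {k : ℝ → ℝ≥0} (hk : BddAbove (Set.range k)) (h0 : ⨆ x, k x ≠ 0) :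
      IsLUB (Set.range fun x => (⨆ x, k x)⁻¹ * k x) 1 := by
    have := (OrderIso.mulLeft₀ _ (inv_pos.2 h0.bot_lt)).isLUB_image'.2 (isLUB_ciSup hk)
    rwa [← Set.range_comp, OrderIso.mulLeft₀_apply, inv_mul_cancel₀ h0] at this
  have key := add_lintegral_le_of_isLUB_one (f := fun x => A⁻¹ * f x) (g := fun x => B⁻¹ * g x)
    (h := fun x => C⁻¹ * h x) (by fun_prop) (by fun_prop) (by fun_prop) ha hb hab
    (hlub hfb hA) (hlub hgb hB) fun x y => by
      calc (A⁻¹ * f x) ^ (a : ℝ) * (B⁻¹ * g y) ^ (b : ℝ)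
          = C⁻¹ * (f x ^ (a : ℝ) * g y ^ (b : ℝ)) := by
            simp only [C, NNReal.mul_rpow, NNReal.inv_rpow, mul_inv]; ring
        _ ≤ C⁻¹ * h (a * x + b * y) := by gcongr; exact H x y
  simp only [ENNReal.coe_mul, lintegral_const_mul' _ _ ENNReal.coe_ne_top] at key
  have := (rpow_mul_rpow_le_add ha hb hab _ _).trans key
  rw [ENNReal.mul_rpow_of_nonneg _ _ a.coe_nonneg, ENNReal.mul_rpow_of_nonneg _ _ b.coe_nonneg,
    ← ENNReal.coe_rpow_of_nonneg _ a.coe_nonneg, ← ENNReal.coe_rpow_of_nonneg _ b.coe_nonneg,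
    mul_mul_mul_comm, ← ENNReal.coe_mul, NNReal.inv_rpow, NNReal.inv_rpow, ← mul_inv] at this
  exact (ENNReal.mul_le_mul_iff_right (ENNReal.coe_ne_zero.2 (inv_ne_zero hC))
    ENNReal.coe_ne_top).1 this

lemma iSup_min_natCast (x : ℝ≥0∞) : ⨆ n : ℕ, min x n = x := by
  rw [← inf_iSup_eq, ENNReal.iSup_natCast, inf_top_eq]

lemma lintegral_eq_iSup_lintegral_min {α : Type*} [MeasurableSpace α] {μ : Measure α}
    {f : α → ℝ≥0∞} (hf : Measurable f) :
    ∫⁻ x, f x ∂μ = ⨆ n : ℕ, ∫⁻ x, min (f x) n ∂μ := by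
  rw [← lintegral_iSup (fun n => hf.min measurable_const)
    fun m n hmn x => min_le_min_left _ (by exact_mod_cast hmn)]
  simp only [iSup_min_natCast]

lemma lintegral_min_natCast_rpow_mul_le {f g h : ℝ → ℝ≥0∞} (hf : Measurable f)
    (hg : Measurable g) (hh : Measurable h) (ha : 0 < a) (hb : 0 < b) (hab : a + b = 1)
    (H : ∀ x y, f x ^ (a : ℝ) * g y ^ (b : ℝ) ≤ h (a * x + b * y)) (n : ℕ) :
    (∫⁻ x, min (f x) n) ^ (a : ℝ) * (∫⁻ x, min (g x) n) ^ (b : ℝ) ≤ ∫⁻ x, min (h x) n := by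
  have hcoe (k : ℝ → ℝ≥0∞) (x : ℝ) : ((min (k x) n).toNNReal : ℝ≥0∞) = min (k x) n :=
    ENNReal.coe_toNNReal (ne_top_of_le_ne_top (natCast_ne_top n) (min_le_right _ _))
  have hbdd (k : ℝ → ℝ≥0∞) : BddAbove (Set.range fun x => (min (k x) n).toNNReal) := by
    refine ⟨n, Set.forall_mem_range.2 fun x => ?_⟩
    rw [← ENNReal.coe_le_coe, hcoe]
    exact min_le_right _ _
  have := lintegral_rpow_mul_lintegral_rpow_le_of_bddAbove
    (h := fun x => (min (h x) n).toNNReal) (hf.min measurable_const).ennreal_toNNReal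
    (hg.min measurable_const).ennreal_toNNReal (hh.min measurable_const).ennreal_toNNReal
    ha hb hab (hbdd f) (hbdd g) fun x y => by
      rw [← ENNReal.coe_le_coe, ENNReal.coe_mul, ENNReal.coe_rpow_of_nonneg _ a.coe_nonneg,
        ENNReal.coe_rpow_of_nonneg _ b.coe_nonneg, hcoe, hcoe, hcoe]
      refine le_min (le_trans ?_ (H x y)) (le_of_le_of_eq ?_ (rpow_mul_rpow_eq_self hab n))
      · gcongr <;> exact min_le_left _ _
      · gcongr <;> exact min_le_right _ _
  simpa only [hcoe] using this

lemma lintegral_rpow_mul_lintegral_rpow_le {f g h : ℝ → ℝ≥0∞} (hf : Measurable f)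
    (hg : Measurable g) (hh : Measurable h) (ha : 0 < a) (hb : 0 < b) (hab : a + b = 1)
    (H : ∀ x y, f x ^ (a : ℝ) * g y ^ (b : ℝ) ≤ h (a * x + b * y)) :
    (∫⁻ x, f x) ^ (a : ℝ) * (∫⁻ x, g x) ^ (b : ℝ) ≤ ∫⁻ x, h x := by
  have hrpow {c : ℝ} (hc : 0 < c) (u : ℕ → ℝ≥0∞) : (⨆ n, u n) ^ c = ⨆ n, u n ^ c :=
    (ENNReal.orderIsoRpow c hc).map_iSup u
  simp only [lintegral_eq_iSup_lintegral_min hf, lintegral_eq_iSup_lintegral_min hg,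
    hrpow (NNReal.coe_pos.2 ha), hrpow (NNReal.coe_pos.2 hb), ENNReal.iSup_mul, ENNReal.mul_iSup]
  refine iSup₂_le fun m n => ?_
  calc (∫⁻ x, min (f x) n) ^ (a : ℝ) * (∫⁻ x, min (g x) m) ^ (b : ℝ)
      ≤ (∫⁻ x, min (f x) (max n m : ℕ)) ^ (a : ℝ) * (∫⁻ x, min (g x) (max n m : ℕ)) ^ (b : ℝ) := by
        gcongr
        · exact le_max_left n m
        · exact le_max_right n m
    _ ≤ ∫⁻ x, min (h x) (max n m : ℕ) :=
        lintegral_min_natCast_rpow_mul_le hf hg hh ha hb hab H _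
    _ ≤ ∫⁻ x, h x := lintegral_mono fun x => min_le_left _ _

end PrekopaLeindler

lemma lintegral_pi_eq_lintegral_lintegral_insertNth {X : Type*} [MeasurableSpace X]
    (ν : Measure X) [SigmaFinite ν] {n : ℕ} (i : Fin (n + 1)) {H : (Fin (n + 1) → X) → ℝ≥0∞}
    (hH : Measurable H) :
    ∫⁻ x, H x ∂Measure.pi (fun _ => ν) =
      ∫⁻ y, ∫⁻ t, H (i.insertNth t y) ∂ν ∂Measure.pi fun _ => ν := by
  rw [← (measurePreserving_piFinSuccAbove (fun _ => ν) i).symm.lintegral_comp hH,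
    lintegral_prod_symm]
  · rfl
  · exact (hH.comp (MeasurableEquiv.measurable _)).aemeasurable

lemma measurable_insertNth {X : Type*} [MeasurableSpace X] {n : ℕ} (i : Fin (n + 1)) :
    Measurable fun p : X × (Fin n → X) => (i.insertNth p.1 p.2 : Fin (n + 1) → X) :=
  (MeasurableEquiv.piFinSuccAbove (fun _ => X) i).symm.measurable

section LogConcave

variable {E F : Type*} [AddCommGroup E] [Module ℝ E] [AddCommGroup F] [Module ℝ F]

/-- Log-concavity of a function with values in `[0, ∞]`, in multiplicative form so that the
values `0` and `∞` need no separate treatment. -/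
def LogConcave (G : E → ℝ≥0∞) : Prop :=
  ∀ a b : ℝ≥0, 0 < a → 0 < b → a + b = 1 →
    ∀ x y, G x ^ (a : ℝ) * G y ^ (b : ℝ) ≤ G ((a : ℝ) • x + (b : ℝ) • y)

namespace LogConcave

lemma comp_linearMap {G : F → ℝ≥0∞} (hG : LogConcave G) (L : E →ₗ[ℝ] F) :
    LogConcave fun x => G (L x) := fun a b ha hb hab x y => by
  simpa only [map_add, map_smul] using hG a b ha hb hab (L x) (L y)

lemma lintegral_prod_real [MeasurableSpace E] {G : E × ℝ → ℝ≥0∞} (hG : LogConcave G)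
    (hm : Measurable G) : LogConcave fun x => ∫⁻ t, G (x, t) := fun a b ha hb hab x y =>
  lintegral_rpow_mul_lintegral_rpow_le (by fun_prop) (by fun_prop) (by fun_prop) ha hb hab
    fun s t => by simpa using hG a b ha hb hab (x, s) (y, t)

lemma lintegral_prod_pi [MeasurableSpace E] {n : ℕ} {G : E × (Fin n → ℝ) → ℝ≥0∞}
    (hG : LogConcave G) (hm : Measurable G) : LogConcave fun x => ∫⁻ y, G (x, y) := by
  induction n with
  | zero =>
    simpa [Measure.volume_pi_eq_dirac (0 : Fin 0 → ℝ)] using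
      hG.comp_linearMap (LinearMap.inl ℝ E (Fin 0 → ℝ))
  | succ n ih =>
    let push : (E × (Fin n → ℝ)) × ℝ →ₗ[ℝ] E × (Fin (n + 1) → ℝ) :=
      (LinearMap.fst ℝ E _ ∘ₗ LinearMap.fst ℝ _ ℝ).prod
        ((Fin.consLinearEquiv ℝ fun _ : Fin (n + 1) => ℝ).toLinearMap ∘ₗ
          (LinearMap.snd ℝ _ ℝ).prod (LinearMap.snd ℝ E _ ∘ₗ LinearMap.fst ℝ _ ℝ))
    have hpush (p) : push p = (p.1.1, Fin.insertNth 0 p.2 p.1.2) := by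
      rw [Fin.insertNth_zero']; rfl
    have hmpush : Measurable push := by
      simp only [funext hpush]
      exact measurable_fst.fst.prodMk
        ((measurable_insertNth 0).comp (measurable_snd.prodMk measurable_fst.snd))
    have hmarg (x : E) : ∫⁻ y, G (x, y) = ∫⁻ y : Fin n → ℝ, ∫⁻ t : ℝ, G (push ((x, y), t)) := by
      simp only [hpush]
      exact lintegral_pi_eq_lintegral_lintegral_insertNth volume 0 (hm.comp measurable_prodMk_left)
    simp only [hmarg]
    exact ih ((hG.comp_linearMap push).lintegral_prod_real (hm.comp hmpush))
      (hm.comp hmpush).lintegral_prod_right'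

lemma apply_add_mul_apply_zero_le {g : ℝ → ℝ≥0∞} (hg : LogConcave g) {x y : ℝ} (hx : 0 < x)
    (hy : 0 < y) : g (x + y) * g 0 ≤ g x * g y := by
  lift x to ℝ≥0 using hx.le
  lift y to ℝ≥0 using hy.le
  rw [NNReal.coe_pos] at hx hy
  set a := x / (x + y) with ha_def
  set b := y / (x + y) with hb_def
  have ha : 0 < a := by positivity
  have hb : 0 < b := by positivity
  have hab : a + b = 1 := by rw [← add_div, div_self (by positivity)]
  have hax : (a : ℝ) * (x + y) = x := by rw [ha_def]; push_cast; field_simp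
  have hby : (b : ℝ) * (x + y) = y := by rw [hb_def]; push_cast; field_simp
  have hx_conv : g (x + y) ^ (a : ℝ) * g 0 ^ (b : ℝ) ≤ g x := by
    simpa only [smul_eq_mul, mul_zero, add_zero, hax] using hg a b ha hb hab (x + y) 0
  have hy_conv : g 0 ^ (a : ℝ) * g (x + y) ^ (b : ℝ) ≤ g y := by
    simpa only [smul_eq_mul, mul_zero, zero_add, hby] using hg a b ha hb hab 0 (x + y)
  calc g (x + y) * g 0
      = (g (x + y) ^ (a : ℝ) * g 0 ^ (b : ℝ)) * (g 0 ^ (a : ℝ) * g (x + y) ^ (b : ℝ)) := by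
        rw [mul_comm (g 0 ^ (a : ℝ)), mul_mul_mul_comm, rpow_mul_rpow_eq_self hab,
          mul_comm (g 0 ^ (b : ℝ)), rpow_mul_rpow_eq_self hab]
    _ ≤ g x * g y := mul_le_mul' hx_conv hy_conv

lemma apply_zero_mul_setLIntegral_Ioi_le {g : ℝ → ℝ≥0∞} (hg : LogConcave g)
    (hm : Measurable g) :
    g 0 * ∫⁻ t in Set.Ioi 0, ‖t‖ₑ * g t ≤ (∫⁻ t in Set.Ioi 0, g t) ^ 2 := by
  set u : ℝ → ℝ≥0∞ := (Set.Ioi 0).indicator g with hu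
  have hmu : Measurable u := hm.indicator measurableSet_Ioi
  have hconv : (∫⁻ t in Set.Ioi 0, g t) ^ 2 = ∫⁻ t, ∫⁻ x, u x * u (t - x) := by
    rw [← lintegral_indicator measurableSet_Ioi, lintegral_lintegral_swap (by fun_prop), sq,
      ← lintegral_mul_const _ hmu]
    refine lintegral_congr fun x => ?_
    rw [lintegral_const_mul _ (by fun_prop), lintegral_sub_right_eq_self]
  rw [hconv, ← lintegral_const_mul _ (by fun_prop), ← lintegral_indicator measurableSet_Ioi]
  refine lintegral_mono fun t => Set.indicator_apply_le' (fun ht : 0 < t => ?_) fun _ => zero_le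
  calc g 0 * (‖t‖ₑ * g t) = ∫⁻ _ in Set.Ioo 0 t, g t * g 0 := by
        rw [setLIntegral_const, Real.volume_Ioo, sub_zero, Real.enorm_of_nonneg ht.le]; ring
    _ ≤ ∫⁻ x in Set.Ioo 0 t, u x * u (t - x) := by
        refine setLIntegral_mono' measurableSet_Ioo fun x hx => ?_
        rw [hu, Set.indicator_of_mem (Set.mem_Ioi.2 hx.1),
          Set.indicator_of_mem (Set.mem_Ioi.2 (sub_pos.2 hx.2))]
        simpa using hg.apply_add_mul_apply_zero_le hx.1 (sub_pos.2 hx.2)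
    _ ≤ ∫⁻ x, u x * u (t - x) := setLIntegral_le_lintegral _ _

end LogConcave

lemma lintegral_eq_two_mul_setLIntegral_Ioi {u : ℝ → ℝ≥0∞} (hu : ∀ t, u (-t) = u t) :
    ∫⁻ t, u t = 2 * ∫⁻ t in Set.Ioi 0, u t := by
  have hneg : ∫⁻ t in Set.Iic 0, u t = ∫⁻ t in Set.Ioi 0, u t := by
    have := (Measure.measurePreserving_neg (volume : Measure ℝ)).setLIntegral_comp_preimage_emb
      (MeasurableEquiv.neg ℝ).measurableEmbedding u (Set.Ioi 0)
    rw [← setLIntegral_congr Iio_ae_eq_Iic]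
    simpa [hu] using this
  rw [← lintegral_add_compl u measurableSet_Iic, hneg, Set.compl_Iic, two_mul]

lemma LogConcave.two_mul_apply_zero_mul_lintegral_le {g : ℝ → ℝ≥0∞} (hg : LogConcave g)
    (hm : Measurable g) (heven : ∀ t, g (-t) = g t) :
    2 * (g 0 * ∫⁻ t, ‖t‖ₑ * g t) ≤ (∫⁻ t, g t) ^ 2 := by
  rw [lintegral_eq_two_mul_setLIntegral_Ioi heven, lintegral_eq_two_mul_setLIntegral_Ioi
    (u := fun t => ‖t‖ₑ * g t) fun t => by rw [enorm_neg, heven], mul_pow]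
  calc 2 * (g 0 * (2 * ∫⁻ t in Set.Ioi 0, ‖t‖ₑ * g t))
      = 2 ^ 2 * (g 0 * ∫⁻ t in Set.Ioi 0, ‖t‖ₑ * g t) := by ring
    _ ≤ 2 ^ 2 * (∫⁻ t in Set.Ioi 0, g t) ^ 2 := by
        gcongr; exact hg.apply_zero_mul_setLIntegral_Ioi_le hm

lemma logConcave_exp_neg_norm {V : Type*} [SeminormedAddCommGroup V] [NormedSpace ℝ V] :
    LogConcave fun x : V => ENNReal.ofReal (Real.exp (-‖x‖)) := fun a b _ _ _ x y => by
  have hconv : ‖(a : ℝ) • x + (b : ℝ) • y‖ ≤ a * ‖x‖ + b * ‖y‖ :=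
    (norm_add_le _ _).trans_eq (by simp [norm_smul])
  rw [ENNReal.ofReal_rpow_of_pos (Real.exp_pos _), ENNReal.ofReal_rpow_of_pos (Real.exp_pos _),
    ← ENNReal.ofReal_mul (by positivity), ← Real.exp_mul, ← Real.exp_mul, ← Real.exp_add]
  exact ENNReal.ofReal_le_ofReal (Real.exp_le_exp.2 (by linarith))

end LogConcave

section NormedSpace

variable {ι E : Type*} [NormedAddCommGroup E] [NormedSpace ℝ E] [MeasurableSpace E]
  [BorelSpace E]

lemma integrable_pow_mul_exp_neg (k : ℕ) :
    IntegrableOn (fun r : ℝ => r ^ k * Real.exp (-r)) (Set.Ioi 0) := by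
  refine (Real.GammaIntegral_convergent (s := k + 1) (by positivity)).congr_fun (fun r _ => ?_)
    measurableSet_Ioi
  simp only [add_sub_cancel_right, Real.rpow_natCast, mul_comm]

lemma integral_pow_mul_exp_neg (k : ℕ) :
    ∫ r in Set.Ioi (0 : ℝ), r ^ k * Real.exp (-r) = k ! := by
  rw [← Real.Gamma_nat_eq_factorial, Real.Gamma_eq_integral (by positivity)]
  simp only [add_sub_cancel_right, Real.rpow_natCast, mul_comm]

lemma lintegral_norm_pow_mul_exp_neg_norm [Nontrivial E] [FiniteDimensional ℝ E] (μ : Measure E)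
    [μ.IsAddHaarMeasure] (k : ℕ) :
    ∫⁻ x, ENNReal.ofReal (‖x‖ ^ k * Real.exp (-‖x‖)) ∂μ =
      (finrank ℝ E * (finrank ℝ E - 1 + k)! : ℕ) * μ (ball 0 1) := by
  have hpow : (fun r : ℝ => r ^ (finrank ℝ E - 1) • (r ^ k * Real.exp (-r))) =
      fun r => r ^ (finrank ℝ E - 1 + k) * Real.exp (-r) := by
    ext r; rw [smul_eq_mul, pow_add, mul_assoc]
  rw [← ofReal_integral_eq_lintegral_ofReal, integral_fun_norm_addHaar μ
    (f := fun r => r ^ k * Real.exp (-r)), hpow, integral_pow_mul_exp_neg, nsmul_eq_mul,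
    smul_eq_mul, Nat.cast_mul, ENNReal.ofReal_mul (by positivity),
    ENNReal.ofReal_mul measureReal_nonneg, ofReal_measureReal measure_ball_lt_top.ne,
    ENNReal.ofReal_natCast, ENNReal.ofReal_natCast]
  · ring
  · rw [integrable_fun_norm_addHaar μ (f := fun r => r ^ k * Real.exp (-r)), hpow]
    exact integrable_pow_mul_exp_neg _
  · exact .of_forall fun x => by positivity

variable [FiniteDimensional ℝ E]

lemma lintegral_exp_neg_norm (μ : Measure E) [μ.IsAddHaarMeasure] :
    ∫⁻ x, ENNReal.ofReal (Real.exp (-‖x‖)) ∂μ = (finrank ℝ E)! * μ (ball 0 1) := by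
  rcases subsingleton_or_nontrivial E with hE | hE
  · simp [Subsingleton.elim _ (0 : E), finrank_zero_of_subsingleton,
      Subsingleton.eq_univ_of_nonempty (nonempty_ball.2 one_pos)]
  · have h := lintegral_norm_pow_mul_exp_neg_norm μ 0
    simpa only [pow_zero, one_mul, add_zero, Nat.mul_factorial_pred finrank_pos.ne'] using h

lemma lintegral_norm_mul_exp_neg_norm (μ : Measure E) [μ.IsAddHaarMeasure] :
    ∫⁻ x, ‖x‖ₑ * ENNReal.ofReal (Real.exp (-‖x‖)) ∂μ =
      finrank ℝ E * ∫⁻ x, ENNReal.ofReal (Real.exp (-‖x‖)) ∂μ := by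
  rcases subsingleton_or_nontrivial E with hE | hE
  · simp [Subsingleton.elim _ (0 : E), finrank_zero_of_subsingleton]
  · have h := lintegral_norm_pow_mul_exp_neg_norm μ 1
    simp only [pow_one, Nat.sub_add_cancel (finrank_pos (R := ℝ) (M := E)),
      ENNReal.ofReal_mul (norm_nonneg _), ofReal_norm] at h
    rw [h, lintegral_exp_neg_norm, Nat.cast_mul, mul_assoc]

lemma map_equivFunL_symm_volume [Fintype ι] (b : Basis ι ℝ E) :
    volume.map b.equivFunL.symm = b.addHaar := by
  rw [← addHaarMeasure_eq_volume_pi, ← Basis.parallelepiped_basisFun, ← Basis.addHaar_def,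
    Basis.map_addHaar]
  congr 1
  ext i
  classical simp [Basis.equivFunL, Pi.basisFun_apply, Pi.single_apply]

lemma lintegral_addHaar [Fintype ι] (b : Basis ι ℝ E) {f : E → ℝ≥0∞} (hf : Measurable f) :
    ∫⁻ x, f x ∂b.addHaar = ∫⁻ c : ι → ℝ, f (∑ i, c i • b i) := by
  rw [← map_equivFunL_symm_volume, lintegral_map hf b.equivFunL.symm.continuous.measurable]
  exact lintegral_congr fun c => congrArg f (b.equivFun_symm_apply c)

end NormedSpace

section ExpVolume

variable {V : Type*} [NormedAddCommGroup V] [NormedSpace ℝ V] {n : ℕ}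

/-- The integral of `exp (-‖·‖)` over the coordinates with respect to a finite family of vectors.
For a linearly independent family it is `n!` times the volume of the unit ball in these
coordinates. It replaces that volume in the induction on dimension because it is a genuine integral,
with log-concave integrand, over all of `ℝⁿ`. -/
noncomputable def expVolume (v : Fin n → V) : ℝ≥0∞ :=
  ∫⁻ c : Fin n → ℝ, ENNReal.ofReal (Real.exp (-‖∑ i, c i • v i‖))

lemma expVolume_basis [FiniteDimensional ℝ V] [MeasurableSpace V] [BorelSpace V]
    (b : Basis (Fin n) ℝ V) : expVolume b = n ! * b.addHaar (ball 0 1) := by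
  rw [expVolume, ← lintegral_addHaar b (f := fun x => ENNReal.ofReal (Real.exp (-‖x‖)))
    (by fun_prop), lintegral_exp_neg_norm, finrank_eq_card_basis b, Fintype.card_fin]

lemma norm_sum_smul_basisSpan {v : Fin n → V} (hv : LinearIndependent ℝ v) (c : Fin n → ℝ) :
    ‖∑ i, c i • Basis.span hv i‖ = ‖∑ i, c i • v i‖ := by
  simp

lemma expVolume_basisSpan {v : Fin n → V} (hv : LinearIndependent ℝ v) :
    expVolume (Basis.span hv) = expVolume v := by
  simp only [expVolume, norm_sum_smul_basisSpan]

lemma expVolume_ne_zero {v : Fin n → V} (hv : LinearIndependent ℝ v) : expVolume v ≠ 0 := by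
  have := FiniteDimensional.span_of_finite ℝ (Set.finite_range v)
  borelize V
  rw [← expVolume_basisSpan hv, expVolume_basis]
  exact mul_ne_zero (Nat.cast_ne_zero.2 n.factorial_ne_zero) (measure_ball_pos _ _ one_pos).ne'

lemma expVolume_ne_top {v : Fin n → V} (hv : LinearIndependent ℝ v) : expVolume v ≠ ⊤ := by
  have := FiniteDimensional.span_of_finite ℝ (Set.finite_range v)
  borelize V
  rw [← expVolume_basisSpan hv, expVolume_basis]
  exact ENNReal.mul_ne_top (natCast_ne_top _) measure_ball_lt_top.ne

lemma lintegral_norm_mul_exp_neg_norm_eq_mul_expVolume {v : Fin n → V}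
    (hv : LinearIndependent ℝ v) :
    ∫⁻ c : Fin n → ℝ, ‖∑ i, c i • v i‖ₑ * ENNReal.ofReal (Real.exp (-‖∑ i, c i • v i‖)) =
      n * expVolume v := by
  have := FiniteDimensional.span_of_finite ℝ (Set.finite_range v)
  borelize V
  have h := lintegral_norm_mul_exp_neg_norm (Basis.span hv).addHaar
  rw [lintegral_addHaar _ (by fun_prop), lintegral_addHaar _ (by fun_prop),
    finrank_span_eq_card hv, Fintype.card_fin] at h
  simpa only [expVolume, ← ofReal_norm, norm_sum_smul_basisSpan] using h

end ExpVolume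

section Reisner

lemma measurable_exp_neg_norm_comp {α V : Type*} [TopologicalSpace α] [MeasurableSpace α]
    [OpensMeasurableSpace α] [SeminormedAddCommGroup V] {f : α → V} (hf : Continuous f) :
    Measurable fun x => ENNReal.ofReal (Real.exp (-‖f x‖)) :=
  (ENNReal.continuous_ofReal.comp (Real.continuous_exp.comp hf.norm.neg)).measurable

variable {V : Type*} [NormedAddCommGroup V] [NormedSpace ℝ V] {n : ℕ}

lemma two_mul_expVolume_mul_lintegral_slice_le (w : V) (v : Fin n → V) :
    2 * (expVolume v * ∫⁻ t : ℝ, ∫⁻ y : Fin n → ℝ,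
        ‖t‖ₑ * ENNReal.ofReal (Real.exp (-‖t • w + ∑ j, y j • v j‖))) ≤
      (∫⁻ t : ℝ, ∫⁻ y : Fin n → ℝ, ENNReal.ofReal (Real.exp (-‖t • w + ∑ j, y j • v j‖))) ^ 2 := by
  let L : ℝ × (Fin n → ℝ) →ₗ[ℝ] V :=
    (LinearMap.toSpanSingleton ℝ V w).coprod (Fintype.linearCombination ℝ v)
  have hL (t : ℝ) (y : Fin n → ℝ) : L (t, y) = t • w + ∑ j, y j • v j := rfl
  simp only [← hL]
  have hm : Measurable fun p => ENNReal.ofReal (Real.exp (-‖L p‖)) :=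
    measurable_exp_neg_norm_comp L.continuous_of_finiteDimensional
  have heven (t : ℝ) : ∫⁻ y, ENNReal.ofReal (Real.exp (-‖L (-t, y)‖)) =
      ∫⁻ y, ENNReal.ofReal (Real.exp (-‖L (t, y)‖)) := by
    rw [← lintegral_neg_eq_self]
    simp only [← Prod.neg_mk, map_neg, norm_neg]
  have hslice := (logConcave_exp_neg_norm.comp_linearMap L).lintegral_prod_pi hm
    |>.two_mul_apply_zero_mul_lintegral_le hm.lintegral_prod_right' heven
  have hmul (t : ℝ) : ∫⁻ y, ‖t‖ₑ * ENNReal.ofReal (Real.exp (-‖L (t, y)‖)) =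
      ‖t‖ₑ * ∫⁻ y, ENNReal.ofReal (Real.exp (-‖L (t, y)‖)) :=
    lintegral_const_mul _ (hm.comp measurable_prodMk_left)
  have hzero : expVolume v = ∫⁻ y, ENNReal.ofReal (Real.exp (-‖L (0, y)‖)) := by
    simp only [expVolume, hL, zero_smul, zero_add]
  simpa only [hmul, ← hzero] using hslice

lemma enorm_mul_lintegral_comp_mul_add {a : ℝ} (ha : a ≠ 0) (b : ℝ) {h : ℝ → ℝ≥0∞}
    (hh : Measurable h) : ‖a‖ₑ * ∫⁻ s, h (s * a + b) = ∫⁻ t, h t := by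
  conv_rhs => rw [← Real.smul_map_volume_mul_right ha, lintegral_smul_measure,
    lintegral_map hh (measurable_mul_const a), ← Real.enorm_eq_ofReal_abs, smul_eq_mul,
    ← lintegral_add_right_eq_self (fun s => h (s * a)) (b / a)]
  simp only [add_mul, div_mul_cancel₀ b ha]

lemma enorm_mul_lintegral_comp_sum_mul {u : Fin (n + 1) → ℝ} {i : Fin (n + 1)} (hi : u i ≠ 0)
    {H : ℝ → (Fin n → ℝ) → ℝ≥0∞} (hH : Measurable fun p : ℝ × (Fin n → ℝ) => H p.1 p.2) :
    ‖u i‖ₑ * ∫⁻ c : Fin (n + 1) → ℝ, H (∑ k, c k * u k) (i.removeNth c) =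
      ∫⁻ t, ∫⁻ y, H t y := by
  have hHc : Measurable fun c : Fin (n + 1) → ℝ => H (∑ k, c k * u k) (i.removeNth c) :=
    hH.comp (f := fun c => (∑ k, c k * u k, i.removeNth c))
      (.prodMk (Finset.measurable_sum _ fun k _ => by fun_prop)
        (measurable_pi_lambda _ fun j => measurable_pi_apply _))
  rw [volume_pi, lintegral_pi_eq_lintegral_lintegral_insertNth volume i hHc,
    ← lintegral_const_mul, lintegral_lintegral_swap hH.aemeasurable]
  · refine lintegral_congr fun y => ?_
    simp only [Fin.sum_univ_succAbove _ i, Fin.insertNth_apply_same,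
      Fin.insertNth_apply_succAbove, Fin.removeNth_insertNth]
    exact enorm_mul_lintegral_comp_mul_add hi _ (hH.comp measurable_prodMk_right)
  · exact (hHc.comp (measurable_insertNth i)).lintegral_prod_left'

/-- One step of Gaussian elimination: the family left after clearing a column `u` of a system with
rows `v`, using row `i` as pivot. It reduces `n + 1` functions to `n` in the induction for
Reisner's inequality. Only meaningful if `u i ≠ 0`. -/
noncomputable def eliminate {W : Type*} [AddCommGroup W] [Module ℝ W] (u : Fin (n + 1) → ℝ)
    (i : Fin (n + 1)) (v : Fin (n + 1) → W) (j : Fin n) : W :=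
  v (i.succAbove j) - (u (i.succAbove j) / u i) • v i

lemma sum_smul_eq_add_sum_smul_eliminate {u : Fin (n + 1) → ℝ} {i : Fin (n + 1)} (hi : u i ≠ 0)
    (v : Fin (n + 1) → V) (c : Fin (n + 1) → ℝ) :
    ∑ k, c k • v k =
      (∑ k, c k * u k) • (u i)⁻¹ • v i + ∑ j, i.removeNth c j • eliminate u i v j := by
  have hpivot : (∑ k, c k * u k) • (u i)⁻¹ • v i =
      c i • v i + (∑ j, c (i.succAbove j) * (u (i.succAbove j) / u i)) • v i := by
    simp only [smul_smul, Fin.sum_univ_succAbove _ i, add_mul, mul_inv_cancel_right₀ hi,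
      Finset.sum_mul, add_smul, mul_assoc, div_eq_mul_inv]
  have helim : ∑ j, i.removeNth c j • eliminate u i v j =
      ∑ j, c (i.succAbove j) • v (i.succAbove j) -
        (∑ j, c (i.succAbove j) * (u (i.succAbove j) / u i)) • v i := by
    simp only [Fin.removeNth, eliminate, smul_sub, smul_smul, Finset.sum_sub_distrib,
      Finset.sum_smul]
  rw [hpivot, helim, Fin.sum_univ_succAbove _ i]
  abel

lemma linearIndependent_eliminate {u : Fin (n + 1) → ℝ} {i : Fin (n + 1)} (hi : u i ≠ 0)
    {v : Fin (n + 1) → V} (hv : LinearIndependent ℝ v) :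
    LinearIndependent ℝ (eliminate u i v) := by
  refine Fintype.linearIndependent_iff.2 fun g hg j => ?_
  set c : Fin (n + 1) → ℝ := i.insertNth (-(∑ j, g j * u (i.succAbove j)) / u i) g with hc
  have hdot : ∑ k, c k * u k = 0 := by
    simp [hc, Fin.sum_univ_succAbove _ i, div_mul_cancel₀ _ hi]
  have hsum := sum_smul_eq_add_sum_smul_eliminate hi v c
  rw [hdot, zero_smul, zero_add, hc, Fin.removeNth_insertNth, hg] at hsum
  simpa [hc] using Fintype.linearIndependent_iff.1 hv _ hsum (i.succAbove j)

lemma two_mul_expVolume_eliminate_mul_lintegral_le {u : Fin (n + 1) → ℝ} {i : Fin (n + 1)}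
    (hi : u i ≠ 0) (v : Fin (n + 1) → V) :
    2 * (expVolume (eliminate u i v) * ∫⁻ c : Fin (n + 1) → ℝ,
        ‖∑ k, c k * u k‖ₑ * ENNReal.ofReal (Real.exp (-‖∑ k, c k • v k‖))) ≤
      ‖u i‖ₑ * expVolume v ^ 2 := by
  have hu : ‖u i‖ₑ ≠ 0 := enorm_ne_zero.2 hi
  have hm : Measurable fun p : ℝ × (Fin n → ℝ) => ENNReal.ofReal
      (Real.exp (-‖p.1 • (u i)⁻¹ • v i + ∑ j, p.2 j • eliminate u i v j‖)) :=
    measurable_exp_neg_norm_comp (by fun_prop)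
  have hslice := two_mul_expVolume_mul_lintegral_slice_le ((u i)⁻¹ • v i) (eliminate u i v)
  rw [← enorm_mul_lintegral_comp_sum_mul hi (measurable_fst.enorm.mul hm),
    ← enorm_mul_lintegral_comp_sum_mul hi hm] at hslice
  simp only [← sum_smul_eq_add_sum_smul_eliminate hi v] at hslice
  refine (ENNReal.mul_le_mul_iff_right hu enorm_ne_top).1 ?_
  calc _ = _ := by ring
    _ ≤ _ := hslice
    _ = _ := by rw [← expVolume]; ring

lemma enorm_det_eq_mul_enorm_det_eliminate (A : Matrix (Fin (n + 1)) (Fin (n + 1)) ℝ)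
    {i : Fin (n + 1)} (hi : A i 0 ≠ 0) :
    ‖A.det‖ₑ = ‖A i 0‖ₑ *
      ‖(Matrix.of fun l m : Fin n => eliminate (A · 0) i (A · m.succ) l).det‖ₑ := by
  set r : Fin (n + 1) → ℝ := fun l => if l = i then 0 else -(A l 0 / A i 0) with hr
  set B : Matrix (Fin (n + 1)) (Fin (n + 1)) ℝ := Matrix.of fun l m => A l m + r l * A i m with hB
  have hdet : B.det = A.det :=
    Matrix.det_eq_of_forall_row_eq_smul_add_const r i (by simp [hr]) fun l m => rfl
  have hcol (l : Fin (n + 1)) (hl : l ≠ i) : B l 0 = 0 := by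
    simp [hB, hr, hl, div_mul_cancel₀ _ hi]
  have hminor : B.submatrix i.succAbove Fin.succ =
      Matrix.of fun l m : Fin n => eliminate (A · 0) i (A · m.succ) l := by
    ext l m
    simp [hB, hr, eliminate, sub_eq_add_neg]
  rw [← hdet, Matrix.det_succ_column_zero, Finset.sum_eq_single i
    (fun l _ hl => by rw [hcol l hl, mul_zero, zero_mul]) (by simp), hminor]
  simp [hB, hr]

section L1

variable {X : Type*} [MeasurableSpace X] {ν : Measure X}

/-- The integral of `|Δ(F₁, …, Fₙ; x)|` over `Xⁿ`, with values in `[0, ∞]`. -/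
noncomputable def detLIntegral (ν : Measure X) (F : Fin n → X → ℝ) : ℝ≥0∞ :=
  ∫⁻ x, ‖(Matrix.of fun l m => F l (x m)).det‖ₑ ∂Measure.pi (fun _ : Fin n => ν)

lemma detLIntegral_congr_ae [SigmaFinite ν] {F G : Fin n → X → ℝ} (h : ∀ l, F l =ᵐ[ν] G l) :
    detLIntegral ν F = detLIntegral ν G := by
  have hentry (l m : Fin n) : ∀ᵐ x ∂Measure.pi (fun _ : Fin n => ν), F l (x m) = G l (x m) :=
    (Measure.tendsto_eval_ae_ae (μ := fun _ : Fin n => ν) (i := m)).eventually (h l)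
  refine lintegral_congr_ae ?_
  filter_upwards [ae_all_iff.2 fun l => ae_all_iff.2 (hentry l)] with x hx
  simp only [hx]

lemma detLIntegral_succ [SigmaFinite ν] {F : Fin (n + 1) → X → ℝ} (hF : ∀ l, Measurable (F l)) :
    detLIntegral ν F = ∫⁻ x, ∫⁻ y : Fin n → X,
      ‖(Matrix.of fun l m => F l ((Fin.cons x y : Fin (n + 1) → X) m)).det‖ₑ
        ∂Measure.pi (fun _ => ν) ∂ν := by
  have hmdet : Measurable fun x : Fin (n + 1) → X => ‖(Matrix.of fun l m => F l (x m)).det‖ₑ := by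
    simp only [Matrix.det_apply, Matrix.of_apply]; fun_prop
  rw [detLIntegral, lintegral_pi_eq_lintegral_lintegral_insertNth ν 0 hmdet,
    lintegral_lintegral_swap]
  · simp only [Fin.insertNth_zero']
  · exact (hmdet.comp ((measurable_insertNth 0).comp measurable_swap)).aemeasurable

lemma coeFn_eliminate (u : Fin (n + 1) → ℝ) (i : Fin (n + 1)) (f : Fin (n + 1) → X →₁[ν] ℝ)
    (j : Fin n) : ⇑(eliminate u i f j) =ᵐ[ν] fun y => eliminate u i (f · y) j := by
  filter_upwards [Lp.coeFn_sub (f (i.succAbove j)) ((u (i.succAbove j) / u i) • f i),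
    Lp.coeFn_smul (u (i.succAbove j) / u i) (f i)] with y hsub hsmul
  simp only [eliminate, hsub, hsmul, Pi.sub_apply, Pi.smul_apply]

lemma lintegral_enorm_det_cons [SigmaFinite ν] (f : Fin (n + 1) → X →₁[ν] ℝ) {x : X}
    {i : Fin (n + 1)} (hi : f i x ≠ 0) :
    ∫⁻ y : Fin n → X, ‖(Matrix.of fun l m =>
        f l ((Fin.cons x y : Fin (n + 1) → X) m)).det‖ₑ
        ∂Measure.pi (fun _ => ν) =
      ‖f i x‖ₑ * detLIntegral ν fun l => ⇑(eliminate (f · x) i f l) := by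
  rw [detLIntegral_congr_ae (coeFn_eliminate (f · x) i f), detLIntegral,
    ← lintegral_const_mul' _ _ enorm_ne_top]
  refine lintegral_congr fun y => ?_
  rw [enorm_det_eq_mul_enorm_det_eliminate _ (by simpa using hi)]
  simp

lemma lintegral_enorm_sum_mul (f : Fin n → X →₁[ν] ℝ) (c : Fin n → ℝ) :
    ∫⁻ x, ‖∑ k, c k * f k x‖ₑ ∂ν = ‖∑ k, c k • f k‖ₑ := by
  rw [Lp.enorm_def, eLpNorm_one_eq_lintegral_enorm]
  refine lintegral_congr_ae ?_
  filter_upwards [Lp.coeFn_finsetSum Finset.univ fun k => c k • f k,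
    ae_all_iff.2 fun k => Lp.coeFn_smul (c k) (f k)] with x hsum hsmul
  rw [hsum, Finset.sum_apply]
  simp only [hsmul, Pi.smul_apply, smul_eq_mul]

lemma measurable_enorm_sum_mul_mul_exp (f : Fin n → X →₁[ν] ℝ) :
    Measurable fun p : X × (Fin n → ℝ) => ‖∑ k, p.2 k * f k p.1‖ₑ *
      ENNReal.ofReal (Real.exp (-‖∑ k, p.2 k • f k‖)) := by
  have : ∀ k, Measurable (f k) := fun k => (Lp.stronglyMeasurable (f k)).measurable
  exact (Measurable.enorm (by fun_prop)).mul
    ((measurable_exp_neg_norm_comp (f := fun c : Fin n → ℝ => ∑ k, c k • f k)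
      (by fun_prop)).comp measurable_snd)

lemma lintegral_lintegral_enorm_sum_mul_mul_exp [SigmaFinite ν] {f : Fin n → X →₁[ν] ℝ}
    (hf : LinearIndependent ℝ f) :
    ∫⁻ x, ∫⁻ c : Fin n → ℝ, ‖∑ k, c k * f k x‖ₑ *
        ENNReal.ofReal (Real.exp (-‖∑ k, c k • f k‖)) ∂volume ∂ν = n * expVolume f := by
  rw [lintegral_lintegral_swap (measurable_enorm_sum_mul_mul_exp f).aemeasurable,
    ← lintegral_norm_mul_exp_neg_norm_eq_mul_expVolume hf]
  refine lintegral_congr fun c => ?_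
  rw [lintegral_mul_const' _ _ ENNReal.ofReal_ne_top, lintegral_enorm_sum_mul]

lemma two_mul_mul_lintegral_enorm_sum_mul_mul_exp_le [SigmaFinite ν]
    (f : Fin (n + 1) → X →₁[ν] ℝ) (x : X) {C : ℝ≥0∞}
    (hC : ∀ i, f i x ≠ 0 → C ≤ expVolume (eliminate (f · x) i f) *
      detLIntegral ν fun l => ⇑(eliminate (f · x) i f l)) :
    2 * C * ∫⁻ c : Fin (n + 1) → ℝ, ‖∑ k, c k * f k x‖ₑ *
        ENNReal.ofReal (Real.exp (-‖∑ k, c k • f k‖)) ≤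
      (∫⁻ y : Fin n → X, ‖(Matrix.of fun l m =>
        f l ((Fin.cons x y : Fin (n + 1) → X) m)).det‖ₑ
        ∂Measure.pi (fun _ => ν)) * expVolume f ^ 2 := by
  by_cases hx : ∀ i, f i x = 0
  · simp [hx]
  obtain ⟨i, hi⟩ := not_forall.1 hx
  rw [lintegral_enorm_det_cons f hi]
  have hslice := two_mul_expVolume_eliminate_mul_lintegral_le (u := (f · x)) hi f
  set M := ∫⁻ c : Fin (n + 1) → ℝ, ‖∑ k, c k * f k x‖ₑ *
    ENNReal.ofReal (Real.exp (-‖∑ k, c k • f k‖))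
  set D := detLIntegral ν fun l => ⇑(eliminate (f · x) i f l)
  calc 2 * C * M ≤ 2 * (expVolume (eliminate (f · x) i f) * D) * M := by gcongr; exact hC i hi
    _ = D * (2 * (expVolume (eliminate (f · x) i f) * M)) := by ring
    _ ≤ D * (‖f i x‖ₑ * expVolume f ^ 2) := by gcongr
    _ = ‖f i x‖ₑ * D * expVolume f ^ 2 := by ring

theorem two_pow_mul_factorial_le_expVolume_mul_detLIntegral [SigmaFinite ν]
    {f : Fin n → X →₁[ν] ℝ} (hf : LinearIndependent ℝ f) :
    2 ^ n * n ! ≤ expVolume f * detLIntegral ν fun l => f l := by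
  induction n with
  | zero => simp [expVolume, detLIntegral, Measure.volume_pi_eq_dirac (0 : Fin 0 → ℝ)]
  | succ n ih =>
    refine (ENNReal.mul_le_mul_iff_right (expVolume_ne_zero hf) (expVolume_ne_top hf)).1 ?_
    calc expVolume f * (2 ^ (n + 1) * (n + 1)!)
        = 2 * (2 ^ n * n !) * ((n + 1 : ℕ) * expVolume f) := by
          rw [Nat.factorial_succ]; push_cast; ring
      _ = ∫⁻ x, 2 * (2 ^ n * n !) * ∫⁻ c : Fin (n + 1) → ℝ, ‖∑ k, c k * f k x‖ₑ *
            ENNReal.ofReal (Real.exp (-‖∑ k, c k • f k‖)) ∂volume ∂ν := by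
          rw [lintegral_const_mul _ (measurable_enorm_sum_mul_mul_exp f).lintegral_prod_right',
            lintegral_lintegral_enorm_sum_mul_mul_exp hf]
      _ ≤ ∫⁻ x, (∫⁻ y : Fin n → X, ‖(Matrix.of fun l m =>
            f l ((Fin.cons x y : Fin (n + 1) → X) m)).det‖ₑ
            ∂Measure.pi (fun _ => ν)) * expVolume f ^ 2 ∂ν :=
          lintegral_mono fun x => two_mul_mul_lintegral_enorm_sum_mul_mul_exp_le f x
            fun i hi => ih (linearIndependent_eliminate hi hf)
      _ = expVolume f * (expVolume f * detLIntegral ν fun l => f l) := by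
          rw [lintegral_mul_const' _ _ (ENNReal.pow_ne_top (expVolume_ne_top hf)),
            detLIntegral_succ fun l => (Lp.stronglyMeasurable (f l)).measurable]
          ring

end L1

end Reisner

section Slices

variable {E : Type*} [NormedAddCommGroup E] [NormedSpace ℝ E]

/-- Every translate of the subspace `V` meets `A` in a relatively open convex set. This is what
survives of convexity when a convex body is contracted slice by slice. -/
def HasOpenConvexSlices (V : Submodule ℝ E) (A : Set E) : Prop :=
  ∀ y : E, IsOpen {v : V | y + v ∈ A} ∧ Convex ℝ {v : V | y + v ∈ A}

lemma HasOpenConvexSlices.mono {V W : Submodule ℝ E} {A : Set E} (hA : HasOpenConvexSlices W A)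
    (hVW : V ≤ W) : HasOpenConvexSlices V A := fun y =>
  ⟨(hA y).1.preimage (continuous_inclusion hVW),
    (hA y).2.linear_preimage (Submodule.inclusion hVW)⟩

lemma hasOpenConvexSlices_of_isOpen {A : Set E} (hA : IsOpen A) (hA' : Convex ℝ A)
    (V : Submodule ℝ E) : HasOpenConvexSlices V A := fun y =>
  ⟨hA.preimage (by fun_prop), (hA'.translate_preimage_right y).linear_preimage V.subtype⟩

variable [FiniteDimensional ℝ E] [MeasurableSpace E] [BorelSpace E]

lemma measure_eq_mul_of_slices (μ : Measure E) [μ.IsAddHaarMeasure] {V : Submodule ℝ E}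
    (ν : Measure V) [ν.IsAddHaarMeasure] {A A' : Set E} (hA : MeasurableSet A)
    (hA' : MeasurableSet A') {c : ℝ≥0∞} (hc : c ≠ ⊤)
    (h : ∀ y : E, ν {v : V | y + v ∈ A'} = c * ν {v : V | y + v ∈ A}) : μ A' = c * μ A := by
  obtain ⟨W, hVW⟩ := V.exists_isCompl
  let e : (V × W) ≃L[ℝ] E := (V.prodEquivOfIsCompl W hVW).toContinuousLinearEquiv
  have he (v : V) (w : W) : e (v, w) = w + v := by simp [e, add_comm]
  let κ : Measure W := Measure.addHaar
  have : Measure.IsAddHaarMeasure ((ν.prod κ).map e) := e.isAddHaarMeasure_map _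
  have hμ := Measure.isAddLeftInvariant_eq_smul μ ((ν.prod κ).map e)
  have hslice {S : Set E} (hS : MeasurableSet S) :
      (ν.prod κ).map e S = ∫⁻ w : W, ν {v : V | (w : E) + v ∈ S} ∂κ := by
    rw [Measure.map_apply e.continuous.measurable hS,
      Measure.prod_apply_symm (e.continuous.measurable hS)]
    simp only [Set.preimage, Set.mem_ofPred_eq, he]
  rw [hμ, Measure.smul_apply, Measure.smul_apply, hslice hA, hslice hA']
  simp only [h, lintegral_const_mul' _ _ hc]
  rw [mul_smul_comm]

lemma exists_measurable_section {V : Submodule ℝ E} {A : Set E} (hA : MeasurableSet A)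
    (hV : ∀ y : E, IsOpen {v : V | y + v ∈ A}) :
    ∃ f : E → E, Measurable f ∧ (∀ x, x - f x ∈ V) ∧ (∀ x, ∀ v ∈ V, f (x + v) = f x) ∧
      ∀ x ∈ A, f x ∈ A := by
  classical
  obtain ⟨W, hWV⟩ := V.exists_isCompl
  let p : E →ₗ[ℝ] E := W.projection V hWV.symm
  have hpm : Measurable p := p.continuous_of_finiteDimensional.measurable
  have hpV (x : E) : x - p x ∈ V := W.sub_projection_mem hWV.symm x
  have hp0 (v : E) (hv : v ∈ V) : p v = 0 :=
    (W.projection_apply_eq_zero_iff hWV.symm).2 hv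
  let q : ℕ → V := TopologicalSpace.denseSeq V
  have hex (x : E) : ∃ n, p x + q n ∈ A ∨ ∀ m, p x + q m ∉ A := by
    by_cases h : ∃ n, p x + q n ∈ A
    · exact h.imp fun _ => Or.inl
    · exact ⟨0, .inr (not_exists.1 h)⟩
  have hS (n : ℕ) : MeasurableSet {x | p x + q n ∈ A} := hA.preimage (by fun_prop)
  refine ⟨fun x => p x + q (Nat.find (hex x)), ?_, fun x => ?_, fun x v hv => ?_, fun x hx => ?_⟩
  · refine hpm.add (Measurable.find (f := fun n _ => (q n : E)) (fun _ => measurable_const)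
      (fun n => ?_) hex)
    refine (hS n).union ?_
    change MeasurableSet {x | ∀ m, p x + q m ∉ A}
    rw [Set.ofPred_forall]
    exact .iInter fun m => (hS m).compl
  · rw [← sub_sub]
    exact V.sub_mem (hpV x) (q _).2
  · simp only [map_add, hp0 v hv, add_zero]
  · obtain ⟨_, hm, m, rfl⟩ := (TopologicalSpace.denseRange_denseSeq V).inter_open_nonempty _
      (hV (p x)) ⟨⟨x - p x, hpV x⟩, by simpa using hx⟩
    exact (Nat.find_spec (hex x)).resolve_right fun h => h m hm

/-- Each slice is contracted towards one of its own points; since that point depends only on the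
slice, differences along `V` scale by `θ`. -/
lemma HasOpenConvexSlices.exists_contraction {V : Submodule ℝ E} {A : Set E}
    (hV : HasOpenConvexSlices V A) (hA : MeasurableSet A) (μ : Measure E) [μ.IsAddHaarMeasure]
    {θ : ℝ} (hθ₀ : 0 < θ) (hθ₁ : θ ≤ 1) :
    ∃ A' ⊆ A, MeasurableSet A' ∧ HasOpenConvexSlices V A' ∧
      μ A' = ENNReal.ofReal (θ ^ finrank ℝ V) * μ A ∧
      ∀ x ∈ A', ∀ y ∈ A', x - y ∈ V → ∃ x' ∈ A, ∃ y' ∈ A, x - y = θ • (x' - y') := by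
  obtain ⟨f, hf, hfV, hfadd, hfA⟩ := exists_measurable_section hA fun y => (hV y).1
  let A' : Set E := {x | f x + θ⁻¹ • (x - f x) ∈ A}
  have hA' : MeasurableSet A' := hA.preimage (by fun_prop)
  have hslice (y : E) : ∃ w : V, {v : V | y + v ∈ A'} =
      (θ⁻¹ • ·) ⁻¹' ((· + w) ⁻¹' {v : V | y + v ∈ A}) := by
    refine ⟨(θ⁻¹ - 1) • ⟨y - f y, hfV y⟩, Set.ext fun v => ?_⟩
    simp only [A', Set.mem_ofPred_eq, Set.mem_preimage, hfadd y v v.2, Submodule.coe_add,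
      Submodule.coe_smul]
    congr! 1
    module
  refine ⟨A', fun x hx => ?_, hA', fun y => ?_, ?_, fun x hx y hy hxy => ?_⟩
  · let v : V := ⟨f x - x, neg_sub x (f x) ▸ V.neg_mem (hfV x)⟩
    have hx' : x + ((1 - θ⁻¹) • v : V) ∈ A := by
      have h : x + (1 - θ⁻¹) • (f x - x) = f x + θ⁻¹ • (x - f x) := by module
      exact h ▸ hx
    have hfx : x + v ∈ A := by
      simpa only [v, add_sub_cancel, hfadd x _ (Submodule.coe_mem _)] using hfA _ hx'
    have h := (hV x).2 hx' hfx hθ₀.le (sub_nonneg.2 hθ₁) (add_sub_cancel _ _)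
    have h0 : θ • (1 - θ⁻¹) • v + (1 - θ) • v = 0 := by
      rw [smul_smul, mul_sub, mul_inv_cancel₀ hθ₀.ne']
      module
    simpa only [h0, Set.mem_ofPred_eq, Submodule.coe_zero, add_zero] using h
  · obtain ⟨w, hw⟩ := hslice y
    rw [hw]
    exact ⟨((hV y).1.preimage (continuous_add_const w)).preimage (continuous_const_smul _),
      ((hV y).2.translate_preimage_left w).smul_preimage _⟩
  · refine measure_eq_mul_of_slices μ (Measure.addHaar : Measure V) hA hA' ofReal_ne_top
      fun y => ?_
    obtain ⟨w, hw⟩ := hslice y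
    rw [hw, Measure.addHaar_preimage_smul _ (inv_ne_zero hθ₀.ne'), measure_preimage_add_right,
      inv_pow, inv_inv, abs_of_pos (by positivity)]
  · have hfxy : f x = f y := by simpa using hfadd y (x - y) hxy
    refine ⟨_, hx, _, hy, ?_⟩
    rw [hfxy, add_sub_add_left_eq_sub, ← smul_sub, smul_inv_smul₀ hθ₀.ne', sub_sub_sub_cancel_right]

end Slices

section Minkowski

variable {n : ℕ}

lemma finrank_flag {K V : Type*} [DivisionRing K] [AddCommGroup V] [Module K V]
    (b : Basis (Fin n) K V) (k : Fin (n + 1)) : finrank K (b.flag k) = k := by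
  have hli := b.linearIndependent.comp ((↑) : {i : Fin n // i.castSucc < k} → Fin n)
    Subtype.val_injective
  have hspan : b.flag k = .span K (Set.range (b ∘ ((↑) : {i : Fin n // i.castSucc < k} → _))) := by
    rw [Basis.flag, Set.image_eq_range]
    rfl
  rw [hspan, finrank_span_eq_card hli, Fintype.card_subtype]
  simpa [Fin.lt_def, k.is_le] using Fin.card_filter_val_lt (n := n) (m := k)

variable {E : Type*} [NormedAddCommGroup E] [NormedSpace ℝ E]

/-- The vectors of `b` realise the successive minima of the lattice `L`: each one is a shortest
lattice vector outside the span of the preceding ones. The `i`-th minimum itself is `‖b i‖`. -/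
def IsSuccessiveMinima (L : Submodule ℤ E) (b : Basis (Fin n) ℝ E) : Prop :=
  (∀ i, b i ∈ L) ∧ ∀ i, ∀ z ∈ L, z ∉ b.flag i.castSucc → ‖b i‖ ≤ ‖z‖

lemma IsSuccessiveMinima.norm_mono {L : Submodule ℤ E} {b : Basis (Fin n) ℝ E}
    (hb : IsSuccessiveMinima L b) : Monotone fun i => ‖b i‖ := fun i j hij =>
  hb.2 i _ (hb.1 j) <| by simpa using hij

section Existence

variable (L : Submodule ℤ E) [DiscreteTopology L] [FiniteDimensional ℝ E]

lemma exists_norm_le_of_subset_lattice {S : Set E} (hS : S.Nonempty) (hSL : S ⊆ L) :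
    ∃ z ∈ S, ∀ w ∈ S, ‖z‖ ≤ ‖w‖ := by
  obtain ⟨w₀, hw₀⟩ := hS
  have hfin : (S ∩ closedBall 0 ‖w₀‖).Finite := by
    have : DiscreteTopology L.toAddSubgroup := inferInstanceAs (DiscreteTopology L)
    exact (Metric.finite_isBounded_inter_isClosed (K := closedBall 0 ‖w₀‖)
      (s := (L.toAddSubgroup : Set E)) DiscreteTopology.isDiscrete isBounded_closedBall
      AddSubgroup.isClosed_of_discrete).subset fun z hz => ⟨hz.2, hSL hz.1⟩
  obtain ⟨z, ⟨hz, hz₀⟩, hmin⟩ := Set.exists_min_image _ (‖·‖) hfin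
    ⟨w₀, hw₀, mem_closedBall_zero_iff.2 le_rfl⟩
  refine ⟨z, hz, fun w hw => ?_⟩
  by_cases h : ‖w‖ ≤ ‖w₀‖
  · exact hmin w ⟨hw, mem_closedBall_zero_iff.2 h⟩
  · exact (mem_closedBall_zero_iff.1 hz₀).trans (not_le.1 h).le

lemma exists_linearIndependent_norm_minimal [IsZLattice ℝ L] {k : ℕ} (hk : k ≤ finrank ℝ E) :
    ∃ v : Fin k → E, LinearIndependent ℝ v ∧ (∀ i, v i ∈ L) ∧
      ∀ i, ∀ z ∈ L, z ∉ Submodule.span ℝ (v '' Set.Iio i) → ‖v i‖ ≤ ‖z‖ := by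
  induction k with
  | zero => exact ⟨0, linearIndependent_empty_type, finZeroElim, finZeroElim⟩
  | succ k ih =>
    obtain ⟨v, hv, hvL, hmin⟩ := ih (Nat.le_of_succ_le hk)
    have hne : ((L : Set E) \ Submodule.span ℝ (Set.range v)).Nonempty := by
      rw [Set.sdiff_nonempty, ← Submodule.span_le, IsZLattice.span_top, top_le_iff]
      intro h
      have := finrank_span_eq_card hv
      rw [h, finrank_top, Fintype.card_fin] at this
      omega
    obtain ⟨z, ⟨hzL, hz⟩, hzmin⟩ := exists_norm_le_of_subset_lattice L hne Set.sdiff_subset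
    refine ⟨Fin.snoc v z, linearIndependent_finSnoc.2 ⟨hv, hz⟩, ?_, ?_⟩
    · exact Fin.lastCases (by simpa using hzL) (by simpa using hvL)
    · refine Fin.lastCases (fun w hwL hw => ?_) fun i w hwL hw => ?_
      · rw [Fin.snoc_last]
        refine hzmin w ⟨hwL, fun h => hw (Submodule.span_mono ?_ h)⟩
        rintro _ ⟨i, rfl⟩
        exact ⟨i.castSucc, i.castSucc_lt_last, Fin.snoc_castSucc ..⟩
      · rw [← Fin.image_castSucc_Iio, Set.image_image] at hw
        simp only [Fin.snoc_castSucc] at hw ⊢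
        exact hmin i w hwL hw

lemma exists_isSuccessiveMinima [IsZLattice ℝ L] (hn : finrank ℝ E = n) :
    ∃ b : Basis (Fin n) ℝ E, IsSuccessiveMinima L b := by
  obtain ⟨v, hv, hvL, hmin⟩ := exists_linearIndependent_norm_minimal L hn.ge
  refine ⟨.mk hv (hv.span_eq_top_of_card_eq_finrank' (by simp [hn])).ge, ?_, ?_⟩
  · simpa using hvL
  · simpa [Basis.flag, Set.Iio] using hmin

end Existence

lemma IsSuccessiveMinima.eq_zero_of_norm_lt {L : Submodule ℤ E} {b : Basis (Fin n) ℝ E}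
    (hb : IsSuccessiveMinima L b) {z : E} (hz : z ∈ L)
    (hlt : ∀ j, z ∈ b.flag j.succ → ‖z‖ < ‖b j‖) : z = 0 := by
  have hmem (k : Fin (n + 1)) : z ∈ b.flag k := by
    induction k using Fin.reverseInduction with
    | last => simp
    | cast j hj => exact not_not.1 fun h => (hb.2 j z hz h).not_gt (hlt j hj)
  simpa using hmem 0

variable [MeasurableSpace E] [BorelSpace E]

lemma div_pow_mul_prod_ite {K : Type*} [Field K] {l : Fin n → K} {i : Fin n} (r : K)
    (hi : l i ≠ 0) : (r / l i) ^ (i : ℕ) * (∏ j, if j ≤ i then l i else l j) =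
      ∏ j, if j < i then r else l j := by
  have hpow : (r / l i) ^ (i : ℕ) = ∏ j, if j < i then r / l i else 1 := by
    rw [← Finset.prod_filter, Finset.prod_const, Finset.filter_gt_eq_Iio, Fin.card_Iio]
  rw [hpow, ← Finset.prod_mul_distrib]
  refine Finset.prod_congr rfl fun j _ => ?_
  rcases lt_trichotomy j i with h | rfl | h
  · simp [h, h.le, hi]
  · simp
  · simp [h.not_gt, h.not_ge]

/-- Descending induction on `m`: the ball of radius `r / 2` works for the whole space, and the
slices along the `m`-th member of the flag are contracted by the factor `r / l m`. -/
lemma exists_measurableSet_forall_sub_mem_flag (b : Basis (Fin n) ℝ E) (μ : Measure E)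
    [μ.IsAddHaarMeasure] {l : Fin n → ℝ} (hl₀ : ∀ i, 0 < l i) (hl : Monotone l)
    (m : Fin (n + 1)) : ∀ r, 0 < r → (∀ i, m ≤ i.castSucc → r ≤ l i) →
    ∃ A, MeasurableSet A ∧ HasOpenConvexSlices (b.flag m) A ∧
      μ A = ENNReal.ofReal (∏ i, if i.castSucc < m then r else l i) * μ (ball 0 (1 / 2)) ∧
      ∀ x ∈ A, ∀ y ∈ A, (x - y ∈ b.flag m → ‖x - y‖ < r) ∧
        ∀ j, m ≤ j.castSucc → x - y ∈ b.flag j.succ → ‖x - y‖ < l j := by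
  have := b.finiteDimensional_of_finite
  induction m using Fin.reverseInduction with
  | last =>
    intro r hr _
    refine ⟨ball 0 (r / 2), measurableSet_ball,
      hasOpenConvexSlices_of_isOpen isOpen_ball (convex_ball _ _) _, ?_,
      fun x hx y hy => ⟨fun _ => ?_, ?_⟩⟩
    · rw [div_eq_mul_one_div, Measure.addHaar_ball_mul_of_pos _ _ hr, finrank_eq_card_basis b]
      simp [Fin.castSucc_lt_last]
    · rw [mem_ball_zero_iff] at hx hy
      linarith [norm_sub_le x y]
    · exact fun j hj => absurd hj (not_le.2 j.castSucc_lt_last)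
  | cast i ih =>
    intro r hr hrl
    have hθ : 0 < r / l i := div_pos hr (hl₀ i)
    obtain ⟨A, hA, hAs, hμA, hAl⟩ := ih (l i) (hl₀ i) fun j hj =>
      hl (Fin.castSucc_le_castSucc_iff.1 (i.castSucc_lt_succ.le.trans hj))
    obtain ⟨A', hA'A, hA', hA's, hμA', hA'r⟩ :=
      (hAs.mono (b.flag_mono i.castSucc_lt_succ.le)).exists_contraction hA μ hθ
        ((div_le_one (hl₀ i)).2 (hrl i le_rfl))
    refine ⟨A', hA', hA's, ?_, fun x hx y hy => ⟨fun hxy => ?_, fun j hj hxy => ?_⟩⟩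
    · simp only [Fin.castSucc_lt_succ_iff] at hμA
      rw [hμA', hμA, finrank_flag, Fin.val_castSucc, ← mul_assoc,
        ← ENNReal.ofReal_mul (pow_nonneg hθ.le _), div_pow_mul_prod_ite r (hl₀ i).ne']
      simp only [Fin.castSucc_lt_castSucc_iff]
    · obtain ⟨x', hx', y', hy', h⟩ := hA'r x hx y hy hxy
      have hxy' : x' - y' ∈ b.flag i.succ :=
        b.flag_mono i.castSucc_lt_succ.le <| (Submodule.smul_mem_iff _ hθ.ne').1 (h ▸ hxy)
      calc ‖x - y‖ = r / l i * ‖x' - y'‖ := by rw [h, norm_smul, Real.norm_of_nonneg hθ.le]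
        _ < r / l i * l i := by gcongr; exact (hAl x' hx' y' hy').1 hxy'
        _ = r := div_mul_cancel₀ r (hl₀ i).ne'
    · rcases hj.eq_or_lt with h | h
      · obtain rfl := Fin.castSucc_injective _ h
        exact (hAl x (hA'A hx) y (hA'A hy)).1 hxy
      · exact (hAl x (hA'A hx) y (hA'A hy)).2 j (Fin.castSucc_lt_iff_succ_le.1 h) hxy

theorem IsSuccessiveMinima.prod_norm_mul_measure_ball_le {L : Submodule ℤ E} [DiscreteTopology L]
    [IsZLattice ℝ L] {b : Basis (Fin n) ℝ E} (hb : IsSuccessiveMinima L b) (μ : Measure E)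
    [μ.IsAddHaarMeasure] {F : Set E} (hF : IsAddFundamentalDomain L F μ) :
    (∏ i, ‖b i‖ₑ) * μ (ball 0 1) ≤ 2 ^ n * μ F := by
  have := b.finiteDimensional_of_finite
  have hF' : IsAddFundamentalDomain L.toAddSubgroup F μ := hF
  have : Countable L.toAddSubgroup := inferInstanceAs (Countable L)
  have hpos (i : Fin n) : 0 < ‖b i‖ := norm_pos_iff.2 (b.ne_zero i)
  obtain ⟨r, hr, hrb⟩ : ∃ r, 0 < r ∧ ∀ i, r ≤ ‖b i‖ := by
    obtain ⟨r, hr, hrb⟩ := Pi.exists_forall_pos_add_lt hpos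
    exact ⟨r, hr, fun i => by simpa using (hrb i).le⟩
  obtain ⟨A, hA, -, hμA, hAb⟩ :=
    exists_measurableSet_forall_sub_mem_flag b μ hpos hb.norm_mono 0 r hr fun i _ => hrb i
  have hAF : μ A ≤ μ F := by
    by_contra! h
    obtain ⟨x, hx, y, hy, z, hz, hzxy⟩ := hF'.exists_ne_zero_vadd_eq hA.nullMeasurableSet h
    have hz' : (z : E) = y - x := eq_sub_of_add_eq hzxy
    exact hz <| Subtype.ext <| hb.eq_zero_of_norm_lt z.2 fun j =>
      hz' ▸ (hAb y hy x hx).2 j j.castSucc.zero_le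
  have hball : μ (ball 0 1) = 2 ^ n * μ (ball 0 (1 / 2)) := by
    simpa [finrank_eq_card_basis b] using Measure.addHaar_ball_mul_of_pos μ (0 : E) two_pos (1 / 2)
  calc (∏ i, ‖b i‖ₑ) * μ (ball 0 1)
      = ENNReal.ofReal (∏ i, ‖b i‖) * (2 ^ n * μ (ball 0 (1 / 2))) := by
        simp only [hball, ENNReal.ofReal_prod_of_nonneg fun i _ => norm_nonneg (b i), ofReal_norm]
    _ = 2 ^ n * μ A := by simp only [hμA, Fin.not_lt_zero, if_false]; ring
    _ ≤ 2 ^ n * μ F := by gcongr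

end Minkowski

section CrossPolytope

lemma lintegral_pi_prod {X : Type*} [MeasurableSpace X] (ν : Measure X) [SigmaFinite ν] {n : ℕ}
    {f : Fin n → X → ℝ≥0∞} (hf : ∀ i, Measurable (f i)) :
    ∫⁻ x, ∏ i, f i (x i) ∂Measure.pi (fun _ => ν) = ∏ i, ∫⁻ t, f i t ∂ν := by
  induction n with
  | zero => simp
  | succ n ih =>
    rw [lintegral_pi_eq_lintegral_lintegral_insertNth ν 0 (by fun_prop), Fin.prod_univ_succ,
      ← ih fun i => hf i.succ, ← lintegral_const_mul _ (by fun_prop)]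
    refine lintegral_congr fun y => ?_
    simp only [Fin.prod_univ_succ, Fin.insertNth_zero', Fin.cons_zero, Fin.cons_succ]
    rw [lintegral_mul_const _ (hf 0)]

variable {V : Type*} [NormedAddCommGroup V] [NormedSpace ℝ V]

lemma enorm_mul_lintegral_exp_neg_norm_smul {v : V} (hv : v ≠ 0) :
    ‖v‖ₑ * ∫⁻ t : ℝ, ENNReal.ofReal (Real.exp (-‖t • v‖)) = 2 := by
  have hv₀ : ‖v‖ ≠ 0 := norm_ne_zero_iff.2 hv
  have hnorm (t : ℝ) : ‖t • v‖ = ‖‖v‖ * t‖ := by rw [norm_smul, norm_mul, norm_norm, mul_comm]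
  simp only [hnorm]
  rw [← lintegral_map (f := fun t => ENNReal.ofReal (Real.exp (-‖t‖))) (by fun_prop) (by fun_prop),
    Real.map_volume_mul_left hv₀, lintegral_smul_measure, lintegral_exp_neg_norm, ← ofReal_norm,
    smul_eq_mul, ← mul_assoc, ← ENNReal.ofReal_mul (norm_nonneg v), abs_inv, abs_norm,
    mul_inv_cancel₀ hv₀]
  simp

lemma two_pow_le_prod_enorm_mul_expVolume {n : ℕ} {v : Fin n → V} (hv : ∀ i, v i ≠ 0) :
    2 ^ n ≤ (∏ i, ‖v i‖ₑ) * expVolume v := by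
  have hexp (c : Fin n → ℝ) : ∏ i, ENNReal.ofReal (Real.exp (-‖c i • v i‖)) ≤
      ENNReal.ofReal (Real.exp (-‖∑ i, c i • v i‖)) := by
    rw [← ENNReal.ofReal_prod_of_nonneg fun i _ => (Real.exp_pos _).le, ← Real.exp_sum,
      Finset.sum_neg_distrib]
    gcongr
    exact norm_sum_le _ _
  calc (2 : ℝ≥0∞) ^ n
      = ∏ i, ‖v i‖ₑ * ∫⁻ t : ℝ, ENNReal.ofReal (Real.exp (-‖t • v i‖)) := by
        simp [enorm_mul_lintegral_exp_neg_norm_smul, hv]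
    _ = (∏ i, ‖v i‖ₑ) * ∫⁻ c : Fin n → ℝ, ∏ i, ENNReal.ofReal (Real.exp (-‖c i • v i‖)) := by
        rw [Finset.prod_mul_distrib, volume_pi, lintegral_pi_prod volume
          (f := fun i t => ENNReal.ofReal (Real.exp (-‖t • v i‖))) fun i =>
            (Continuous.measurable (by fun_prop)).ennreal_ofReal]
    _ ≤ (∏ i, ‖v i‖ₑ) * expVolume v := by
        gcongr
        exact lintegral_mono hexp

end CrossPolytope

section Index

variable {E : Type*} [NormedAddCommGroup E] [NormedSpace ℝ E] {n : ℕ}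

lemma addHaar_fundamentalDomain {ι : Type*} [Fintype ι] [MeasurableSpace E] [BorelSpace E]
    (b : Basis ι ℝ E) : b.addHaar (ZSpan.fundamentalDomain b) = 1 := by
  have := b.finiteDimensional_of_finite
  rw [measure_congr (ZSpan.fundamentalDomain_ae_parallelepiped b _)]
  exact b.addHaar_self

lemma addHaar_eq_smul_addHaar {ι : Type*} [Fintype ι] [DecidableEq ι] [MeasurableSpace E]
    [BorelSpace E] (b b' : Basis ι ℝ E) :
    b.addHaar = ENNReal.ofReal |b.det b'| • b'.addHaar := by
  have := b.finiteDimensional_of_finite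
  have h := Measure.isAddLeftInvariant_eq_smul b.addHaar b'.addHaar
  have hdet := ZSpan.measure_fundamentalDomain b' b.addHaar b
  rw [addHaar_fundamentalDomain, mul_one, h, Measure.smul_apply, addHaar_fundamentalDomain] at hdet
  rw [h, ← hdet, smul_assoc, one_smul]

lemma expVolume_eq_det_mul_expVolume (b b' : Basis (Fin n) ℝ E) :
    expVolume b = ENNReal.ofReal |b.det b'| * expVolume b' := by
  have := b.finiteDimensional_of_finite
  borelize E
  rw [expVolume_basis, expVolume_basis, addHaar_eq_smul_addHaar b b', Measure.smul_apply,
    smul_eq_mul, mul_left_comm]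

lemma index_span_range_eq_natAbs_det {a : Fin n → Fin n → ℤ} (ha : LinearIndependent ℤ a) :
    (Submodule.span ℤ (Set.range a)).toAddSubgroup.index = (Matrix.of a).det.natAbs := by
  have h := Submodule.natAbs_det_basis_change (Pi.basisFun ℤ (Fin n)) _ (Basis.span ha)
  have hcoe : (↑) ∘ Basis.span ha = a := funext fun i => congrArg _ (Basis.span_apply ha i)
  rw [hcoe, Pi.basisFun_det_apply] at h
  exact h.symm

theorem exists_basis_prod_enorm_mul_expVolume_le (B : Basis (Fin n) ℝ E) :
    ∃ b : Basis (Fin n) ℝ E, (∀ i, b i ∈ Submodule.span ℤ (Set.range B)) ∧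
      (∏ i, ‖b i‖ₑ) * expVolume B ≤ 2 ^ n * n ! := by
  have := B.finiteDimensional_of_finite
  borelize E
  obtain ⟨b, hb⟩ := exists_isSuccessiveMinima (Submodule.span ℤ (Set.range B))
    (finrank_eq_card_basis B |>.trans (Fintype.card_fin n))
  refine ⟨b, hb.1, ?_⟩
  calc (∏ i, ‖b i‖ₑ) * expVolume B = n ! * ((∏ i, ‖b i‖ₑ) * B.addHaar (ball 0 1)) := by
        rw [expVolume_basis, mul_left_comm]
    _ ≤ n ! * (2 ^ n * B.addHaar (ZSpan.fundamentalDomain B)) := by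
        gcongr (n ! : ℝ≥0∞) * ?_
        exact hb.prod_norm_mul_measure_ball_le _ (ZSpan.isAddFundamentalDomain B B.addHaar)
    _ = 2 ^ n * n ! := by rw [addHaar_fundamentalDomain, mul_one, mul_comm]

lemma abs_det_le_factorial {b B : Basis (Fin n) ℝ E}
    (h : (∏ i, ‖b i‖ₑ) * expVolume B ≤ 2 ^ n * n !) : |B.det b| ≤ n ! := by
  have hle : 2 ^ n * ENNReal.ofReal |B.det b| ≤ 2 ^ n * n ! := calc
    2 ^ n * ENNReal.ofReal |B.det b|
        ≤ ((∏ i, ‖b i‖ₑ) * expVolume b) * ENNReal.ofReal |B.det b| := by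
          gcongr
          exact two_pow_le_prod_enorm_mul_expVolume b.ne_zero
    _ = (∏ i, ‖b i‖ₑ) * expVolume B := by
          rw [expVolume_eq_det_mul_expVolume B b, mul_assoc, mul_comm (expVolume b)]
    _ ≤ 2 ^ n * n ! := h
  rw [ENNReal.mul_le_mul_iff_right (by simp) (by simp), ← ENNReal.ofReal_natCast] at hle
  exact (ENNReal.ofReal_le_ofReal_iff (Nat.cast_nonneg _)).1 hle

theorem exists_int_prod_enorm_mul_expVolume_le {V : Type*} [NormedAddCommGroup V] [NormedSpace ℝ V]
    {v : Fin n → V} (hv : LinearIndependent ℝ v) : ∃ a : Fin n → Fin n → ℤ,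
      LinearIndependent ℤ a ∧ (∏ i, ‖∑ j, (a i j : ℝ) • v j‖ₑ) * expVolume v ≤ 2 ^ n * n ! ∧
        (Submodule.span ℤ (Set.range a)).toAddSubgroup.index ≤ n ! := by
  let B := Basis.span hv
  obtain ⟨b, hbL, hb⟩ := exists_basis_prod_enorm_mul_expVolume_le B
  choose a ha using fun i => (Submodule.mem_span_range_iff_exists_fun ℤ).1 (hbL i)
  have hcomp : Fintype.linearCombination ℤ B ∘ a = b := funext ha
  have hli : LinearIndependent ℤ a :=
    .of_comp (Fintype.linearCombination ℤ B) (hcomp ▸ b.linearIndependent.restrict_scalars' ℤ)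
  have hdet : B.det b = (Matrix.of a).det := by
    rw [Basis.det_apply, ← Matrix.det_transpose, Int.cast_det]
    congr 1
    ext i j
    simp [Basis.toMatrix_apply, ← ha, Finsupp.single_apply]
  have hnorm (i : Fin n) : ‖∑ j, (a i j : ℝ) • v j‖ₑ = ‖b i‖ₑ := by
    rw [← ofReal_norm, ← norm_sum_smul_basisSpan hv, ofReal_norm, ← ha i]
    simp only [Int.cast_smul_eq_zsmul, B]
  refine ⟨a, hli, ?_, ?_⟩
  · simpa only [hnorm, ← expVolume_basisSpan hv] using hb
  · have h := abs_det_le_factorial hb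
    rw [index_span_range_eq_natAbs_det hli]
    rw [hdet, ← Int.cast_abs, ← Nat.cast_natAbs] at h
    exact_mod_cast h

end Index

section L1

variable {X : Type*} [MeasurableSpace X] {ν : Measure X} {n : ℕ} {F : Fin n → X → ℝ}

lemma norm_sum_smul_toL1 (hF : ∀ i, Integrable (F i) ν) (c : Fin n → ℝ) :
    ‖∑ i, c i • (hF i).toL1 (F i)‖ = ∫ x, |∑ i, c i * F i x| ∂ν := by
  rw [← toReal_enorm, ← lintegral_enorm_sum_mul,
    ← integral_norm_eq_lintegral_enorm (Finset.aestronglyMeasurable_fun_sum _ fun i _ =>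
      (Lp.aestronglyMeasurable _).const_mul _)]
  refine integral_congr_ae ?_
  filter_upwards [ae_all_iff.2 fun i => (hF i).coeFn_toL1] with x hx
  simp only [hx, Real.norm_eq_abs]

lemma integrable_det [SigmaFinite ν] (hF : ∀ i, Integrable (F i) ν) :
    Integrable (fun x : Fin n → X => (Matrix.of fun l m => F l (x m)).det)
      (Measure.pi fun _ => ν) := by
  simp only [Matrix.det_apply, Matrix.of_apply]
  exact integrable_finsetSum _ fun σ _ =>
    (Integrable.fintype_prod (f := fun i => F (σ i)) fun i => hF (σ i)).smul _

lemma detLIntegral_toL1 [SigmaFinite ν] (hF : ∀ i, Integrable (F i) ν) :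
    (detLIntegral ν fun i => (hF i).toL1 (F i)) = ENNReal.ofReal
      (∫ x : Fin n → X, |(Matrix.of fun l m => F l (x m)).det| ∂Measure.pi fun _ => ν) := by
  rw [detLIntegral_congr_ae fun i => (hF i).coeFn_toL1]
  exact (ofReal_integral_norm_eq_lintegral_enorm (integrable_det hF)).symm

end L1

/-- Theorem 4: there are linearly independent `b₁,…,b_N ∈ ℤ^N` with
`∏ ‖T(b_n)‖₁ ≤ ∫_{X^N} |Δ(F₁,…,F_N;x)| dν^N(x)`, and the `ℤ`-module they
generate has index at most `N!` in `ℤ^N`. -/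
theorem stmt9 {X : Type*} [MeasurableSpace X] (ν : Measure X) [SigmaFinite ν]
    (N : ℕ) (F : Fin N → X → ℝ) (hF : ∀ n, Integrable (F n) ν)
    (hind : ∀ ξ : Fin N → ℝ, (∫ x, |∑ n, ξ n * F n x| ∂ν) = 0 → ξ = 0) :
    ∃ b : Fin N → (Fin N → ℤ), LinearIndependent ℤ b ∧
      (∏ n, ∫ x, |∑ i, (b n i : ℝ) * F i x| ∂ν) ≤
        (∫ x : Fin N → X, |Matrix.det (Matrix.of fun l n => F l (x n))|
          ∂(Measure.pi fun _ => ν)) ∧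
      (Submodule.span ℤ (Set.range b)).toAddSubgroup.index ≤ N.factorial := by
  let f (n : Fin N) : X →₁[ν] ℝ := (hF n).toL1 (F n)
  have hf : LinearIndependent ℝ f := Fintype.linearIndependent_iff.2 fun c hc =>
    congrFun <| hind c <| by rw [← norm_sum_smul_toL1 hF, hc, norm_zero]
  obtain ⟨b, hb, hminkowski, hindex⟩ := exists_int_prod_enorm_mul_expVolume_le hf
  have hreisner := two_pow_mul_factorial_le_expVolume_mul_detLIntegral hf
  have hprod : ∏ n, ‖∑ i, (b n i : ℝ) • f i‖ₑ ≤ detLIntegral ν fun i => f i := by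
    rw [← ENNReal.mul_le_mul_iff_left (expVolume_ne_zero hf) (expVolume_ne_top hf)]
    exact (hminkowski.trans hreisner).trans_eq (mul_comm _ _)
  refine ⟨b, hb, ?_, hindex⟩
  simp only [f, detLIntegral_toL1, ← ofReal_norm, norm_sum_smul_toL1] at hprod
  rwa [← ENNReal.ofReal_prod_of_nonneg fun n _ => by positivity,
    ENNReal.ofReal_le_ofReal_iff (by positivity)] at hprod
end
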